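/- arXiv:2009.12709 — 2 statements merged into one kernel-verified Lean document; each statement's English description precedes it below -/
import Mathlib

section
/- For every N ≥ 1 and every dimension d ≥ 3, the fundamental group of the unordered configuration space C_N(ℝ^d) of N distinct points in ℝ^d, based at any point, is isomorphic to the symmetric group on N letters: for every X ∈ C_N(ℝ^d) there exists a group isomorphism FundamentalGroup(C_N(ℝ^d), X) ≃ S_N (the permutation group of Fin N). -/
/-- The equivalence relation on injective tuples of `N` points of `ℝ^d` identifying tuples
that differ by a permutation of the labels. -/
def configSetoid (d N : ℕ) :
    Setoid {x : Fin N → Fin d → ℝ // Function.Injective x} where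
  r x y := ∃ σ : Equiv.Perm (Fin N), y.1 = x.1 ∘ ⇑σ
  iseqv := by
    refine ⟨fun x => ⟨Equiv.refl _, rfl⟩, ?_, ?_⟩
    · rintro x y ⟨σ, h⟩
      exact ⟨σ.symm, by rw [h]; funext i; simp⟩
    · rintro x y z ⟨σ, h⟩ ⟨τ, h'⟩
      exact ⟨τ.trans σ, by rw [h', h]; rfl⟩

/-- The unordered configuration space of `N` distinct points in `ℝ^d`, i.e. the quotient of
the space of injective `N`-tuples by the permutation action, with the quotient topology. -/
abbrev ConfigSpace (d N : ℕ) : Type := Quotient (configSetoid d N)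

/-!
The symmetric group acts freely and properly discontinuously on the space of ordered
configurations, so as soon as the latter is simply connected, the quotient map is a universal
covering and the fundamental group of the quotient is the group of deck transformations, up to the
inversion that turns the opposite group into the group itself.

Ordered configurations are the complement `U` of the finitely many diagonals `x i = x j`, closed
subspaces of codimension at least `3`. A loop in `U` is homotopic in `U` to one supported on
finitely many segments `[u, v]`. For each diagonal `W`, the subspace `W + span {u, v}` is proper
because `W` has codimension at least `3`, so some point `p` lies on none of these subspaces. Then no
segment from `p` to a point of the loop meets any `W`: the loop lies in the set of points visible
from `p` inside `U`, which is star-shaped, and so it is null-homotopic.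
-/

open Set Topology

section SimplyConnectedSubsets

variable {X : Type*} [TopologicalSpace X]

theorem homotopic_of_isSimplyConnected {S : Set X} (hS : IsSimplyConnected S) {x y : X}
    {p q : Path x y} (hp : ∀ t, p t ∈ S) (hq : ∀ t, q t ∈ S) : p.Homotopic q := by
  have := hS.simplyConnectedSpace
  have hx : x ∈ S := by simpa using hp 0
  have hy : y ∈ S := by simpa using hp 1
  let p' : Path (⟨x, hx⟩ : S) ⟨y, hy⟩ :=
    { toFun := fun t ↦ ⟨p t, hp t⟩, source' := by simp, target' := by simp }
  let q' : Path (⟨x, hx⟩ : S) ⟨y, hy⟩ :=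
    { toFun := fun t ↦ ⟨q t, hq t⟩, source' := by simp, target' := by simp }
  exact (SimplyConnectedSpace.paths_homotopic p' q').map ⟨Subtype.val, continuous_subtype_val⟩

theorem isSimplyConnected_preimage_coe {S U : Set X} (hS : IsSimplyConnected S) (hSU : S ⊆ U) :
    IsSimplyConnected ((↑) ⁻¹' S : Set U) := by
  rwa [← IsEmbedding.subtypeVal.isSimplyConnected_image, Subtype.image_preimage_coe,
    inter_eq_right.2 hSU]

end SimplyConnectedSubsets

section VisibleFromPoint

open unitInterval

variable {V : Type*} [AddCommGroup V] [Module ℝ V]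

/-- A subset of a real vector space contained in the union of finitely many segments, for instance
the image of a polygonal path. Each pair in `F` consists of the endpoints of one segment. -/
def HasFiniteSegmentCover (s : Set V) : Prop :=
  ∃ F : Set (V × V), F.Finite ∧ s ⊆ ⋃ e ∈ F, segment ℝ e.1 e.2

theorem HasFiniteSegmentCover.mono {s t : Set V} (ht : HasFiniteSegmentCover t) (hst : s ⊆ t) :
    HasFiniteSegmentCover s :=
  let ⟨F, hF, htF⟩ := ht
  ⟨F, hF, hst.trans htF⟩

theorem HasFiniteSegmentCover.union {s t : Set V} (hs : HasFiniteSegmentCover s)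
    (ht : HasFiniteSegmentCover t) : HasFiniteSegmentCover (s ∪ t) := by
  obtain ⟨F, hF, hsF⟩ := hs
  obtain ⟨G, hG, htG⟩ := ht
  refine ⟨F ∪ G, hF.union hG, ?_⟩
  rw [biUnion_union]
  exact union_subset_union hsF htG

theorem hasFiniteSegmentCover_segment (x y : V) : HasFiniteSegmentCover (segment ℝ x y) :=
  ⟨{(x, y)}, finite_singleton _, by simp⟩

theorem hasFiniteSegmentCover_singleton (x : V) : HasFiniteSegmentCover {x} := by
  simpa using hasFiniteSegmentCover_segment x x

theorem starConvex_setOf_segment_subset (p : V) (U : Set V) :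
    StarConvex ℝ p {z | segment ℝ p z ⊆ U} :=
  starConvex_iff_segment_subset.2 fun _ hy _ hz ↦
    ((convex_segment p _).segment_subset (left_mem_segment ℝ p _) hz).trans hy

variable [TopologicalSpace V] {U : Set V}

theorem exists_partition_subpath_mem_convex [LocallyConvexSpace ℝ V] (hU : IsOpen U) {x y : U}
    (γ : Path x y) :
    ∃ t : ℕ → I, t 0 = 0 ∧ (∃ n, t n = 1) ∧
      ∀ k, ∃ C ⊆ U, Convex ℝ C ∧ ∀ s, (γ.subpath (t k) (t (k + 1)) s : V) ∈ C := by
  have hconv (z : U) : ∃ C ∈ 𝓝 (z : V), Convex ℝ C ∧ C ⊆ U := by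
    obtain ⟨C, ⟨hzC, hC⟩, hCU⟩ :=
      (LocallyConvexSpace.convex_basis (𝕜 := ℝ) (z : V)).mem_iff.1 (hU.mem_nhds z.2)
    exact ⟨C, hzC, hC, hCU⟩
  choose C hzC hC hCU using hconv
  have hcont : Continuous fun s ↦ (γ s : V) := by fun_prop
  obtain ⟨t, ht0, htmono, ⟨n, htn⟩, ht⟩ := exists_monotone_Icc_subset_open_cover_unitInterval
    (c := fun z : U ↦ (fun s ↦ (γ s : V)) ⁻¹' interior (C z))
    (fun z ↦ isOpen_interior.preimage hcont)
    fun s _ ↦ mem_iUnion.2 ⟨γ s, mem_interior_iff_mem_nhds.2 (hzC _)⟩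
  refine ⟨t, ht0, ⟨n, htn n le_rfl⟩, fun k ↦ ?_⟩
  obtain ⟨z, hz⟩ := ht k
  refine ⟨C z, hCU z, hC z, fun s ↦ ?_⟩
  obtain ⟨r, hr, hrs⟩ : γ.subpath (t k) (t (k + 1)) s ∈ γ '' Icc (t k) (t (k + 1)) :=
    γ.range_subpath_of_le _ _ (htmono k.le_succ) ▸ mem_range_self s
  exact hrs ▸ interior_subset (hz hr)

variable [IsTopologicalAddGroup V] [ContinuousSMul ℝ V]

theorem isSimplyConnected_of_starConvex {S : Set V} {p : V} (hS : StarConvex ℝ p S)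
    (hne : S.Nonempty) : IsSimplyConnected S :=
  have := hS.contractibleSpace hne
  SimplyConnectedSpace.ofContractible S

theorem exists_homotopic_mem_segment {C : Set V} (hC : Convex ℝ C) (hCU : C ⊆ U) {x y : U}
    (γ : Path x y) (hγ : ∀ t, (γ t : V) ∈ C) :
    ∃ g : Path x y, γ.Homotopic g ∧ ∀ t, (g t : V) ∈ segment ℝ (x : V) y := by
  have hx : (x : V) ∈ C := by simpa using hγ 0
  have hy : (y : V) ∈ C := by simpa using hγ 1
  have hsegC : segment ℝ (x : V) y ⊆ C := hC.segment_subset hx hy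
  have hconn : IsPathConnected ((↑) ⁻¹' segment ℝ (x : V) y : Set U) :=
    ((convex_segment (x : V) y).isPathConnected ⟨x, left_mem_segment ℝ _ _⟩).preimage_coe
      (hsegC.trans hCU)
  obtain ⟨g, hg⟩ := hconn.joinedIn x (left_mem_segment ℝ _ _) y (right_mem_segment ℝ _ _)
  have hCsc : IsSimplyConnected ((↑) ⁻¹' C : Set U) :=
    isSimplyConnected_preimage_coe (isSimplyConnected_of_starConvex (hC.starConvex hx) ⟨x, hx⟩) hCU
  exact ⟨g, homotopic_of_isSimplyConnected hCsc hγ fun t ↦ hsegC (hg t), hg⟩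

variable [LocallyConvexSpace ℝ V]

theorem exists_homotopic_hasFiniteSegmentCover (hU : IsOpen U) {x y : U} (γ : Path x y) :
    ∃ g : Path x y, γ.Homotopic g ∧ HasFiniteSegmentCover (range fun t ↦ (g t : V)) := by
  obtain ⟨t, ht0, ⟨n, htn⟩, ht⟩ := exists_partition_subpath_mem_convex hU γ
  have hinitial (k : ℕ) : ∃ g : Path (γ (t 0)) (γ (t k)), (γ.subpath (t 0) (t k)).Homotopic g ∧
      HasFiniteSegmentCover (range fun s ↦ (g s : V)) := by
    induction k with
    | zero =>
      refine ⟨.refl _, by simp [Path.Homotopic.refl], ?_⟩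
      simpa using hasFiniteSegmentCover_singleton (γ (t 0) : V)
    | succ k ih =>
      obtain ⟨g, hγg, hg⟩ := ih
      obtain ⟨C, hCU, hC, hγC⟩ := ht k
      obtain ⟨g', hγg', hg'⟩ := exists_homotopic_mem_segment hC hCU _ hγC
      refine ⟨g.trans g', .trans ⟨(Path.Homotopy.subpathTransSubpath γ _ _ _).symm⟩
        (hγg.hcomp hγg'), ?_⟩
      refine (hg.union (hasFiniteSegmentCover_segment (γ (t k) : V) (γ (t (k + 1))))).mono ?_
      rw [← Function.comp_def, range_comp, Path.trans_range, image_union]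
      gcongr
      · exact (range_comp ..).ge
      · rintro _ ⟨_, ⟨s, rfl⟩, rfl⟩
        exact hg' s
  have hwhole := hinitial n
  rw [ht0, htn, γ.subpath_zero_one] at hwhole
  obtain ⟨g, hγg, hg⟩ := hwhole
  exact ⟨g.cast γ.source.symm γ.target.symm, hγg.pathCast _ _, hg⟩

theorem isSimplyConnected_of_forall_exists_segment_subset (hU : IsOpen U) (hne : U.Nonempty)
    (hvis : ∀ s ⊆ U, HasFiniteSegmentCover s → ∃ p, ∀ z ∈ s, segment ℝ p z ⊆ U) :
    IsSimplyConnected U := by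
  refine simply_connected_iff_loops_nullhomotopic.2
    ⟨isPathConnected_iff_pathConnectedSpace.1 (isPathConnected_iff.2 ⟨hne, ?_⟩), fun x γ ↦ ?_⟩
  · intro x hx y hy
    obtain ⟨p, hp⟩ := hvis {x, y} (pair_subset hx hy)
      ((hasFiniteSegmentCover_singleton x).union (hasFiniteSegmentCover_singleton y))
    exact (JoinedIn.of_segment_subset (hp x (by simp))).symm.trans
      (JoinedIn.of_segment_subset (hp y (by simp)))
  · obtain ⟨g, hγg, hg⟩ := exists_homotopic_hasFiniteSegmentCover hU γ
    obtain ⟨p, hp⟩ := hvis _ (range_subset_iff.2 fun t ↦ (g t).2) hg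
    have hgS (t : I) : (g t : V) ∈ {z | segment ℝ p z ⊆ U} := hp _ (mem_range_self t)
    have hS : IsSimplyConnected {z | segment ℝ p z ⊆ U} :=
      isSimplyConnected_of_starConvex (starConvex_setOf_segment_subset p U) ⟨g 0, hgS 0⟩
    have hSU : {z | segment ℝ p z ⊆ U} ⊆ U := fun z hz ↦ hz (right_mem_segment ℝ p z)
    exact hγg.trans (homotopic_of_isSimplyConnected (isSimplyConnected_preimage_coe hS hSU) hgS
      fun _ ↦ by simpa using hgS 0)

end VisibleFromPoint

section SubspaceArrangement

open Submodule Cardinal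

variable {K V : Type*} [DivisionRing K] [AddCommGroup V] [Module K V]

theorem rank_quotient_le_of_sup_span_eq_top {W : Submodule K V} {s : Set V}
    (h : W ⊔ span K s = ⊤) : Module.rank K (V ⧸ W) ≤ #s := by
  have hspan : span K (W.mkQ '' s) = ⊤ := by
    rw [← map_span, ← range_mkQ W, ← Submodule.map_top, ← h, Submodule.map_sup, mkQ_map_self,
      bot_sup_eq]
  calc Module.rank K (V ⧸ W) = Module.rank K (span K (W.mkQ '' s)) := by rw [hspan, rank_top]
    _ ≤ #(W.mkQ '' s) := rank_span_le _
    _ ≤ #s := mk_image_le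

theorem sup_span_pair_ne_top {W : Submodule K V} (hW : 2 < Module.rank K (V ⧸ W)) (u v : V) :
    W ⊔ span K {u, v} ≠ ⊤ := fun h ↦ by
  have hcard : #({u, v} : Set V) ≤ 2 :=
    mk_insert_le.trans (by rw [mk_singleton, one_add_one_eq_two])
  exact hW.not_ge ((rank_quotient_le_of_sup_span_eq_top h).trans hcard)

theorem exists_forall_notMem_sup_span_pair [Infinite K] {ι : Type*} [Finite ι]
    {W : ι → Submodule K V} (hW : ∀ i, 2 < Module.rank K (V ⧸ W i)) {F : Set (V × V)}
    (hF : F.Finite) : ∃ p, ∀ i, ∀ e ∈ F, p ∉ W i ⊔ span K {e.1, e.2} := by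
  have := hF.to_subtype
  by_contra! hcover
  obtain ⟨⟨i, e⟩, htop⟩ := Subspace.exists_eq_top_of_iUnion_eq_univ
    (p := fun a : ι × F ↦ W a.1 ⊔ span K {a.2.1.1, a.2.1.2}) (eq_univ_iff_forall.2 fun p ↦ by
      obtain ⟨i, e, he, hp⟩ := hcover p
      exact mem_iUnion.2 ⟨(i, ⟨e, he⟩), hp⟩)
  exact sup_span_pair_ne_top (hW i) _ _ htop

theorem lineMap_notMem_of_notMem_sup {W S : Submodule K V} {p z : V} (hp : p ∉ W ⊔ S)
    (hzS : z ∈ S) (hzW : z ∉ W) (a : K) : AffineMap.lineMap p z a ∉ W := fun h ↦ by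
  rw [AffineMap.lineMap_apply_module] at h
  obtain rfl | ha := eq_or_ne a 1
  · exact hzW (by simpa using h)
  · have hap : (1 - a) • p ∈ W ⊔ S := by
      simpa using sub_mem (mem_sup_left (T := S) h) (mem_sup_right (S := W) (S.smul_mem a hzS))
    exact hp (((W ⊔ S).smul_mem_iff (sub_ne_zero.2 ha.symm)).1 hap)

theorem segment_subset_span_pair {E : Type*} [AddCommGroup E] [Module ℝ E] (u v : E) :
    segment ℝ u v ⊆ span ℝ {u, v} := by
  rintro _ ⟨a, b, -, -, -, rfl⟩
  exact mem_span_pair.2 ⟨a, b, rfl⟩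

theorem isSimplyConnected_setOf_forall_notMem {E : Type*} [AddCommGroup E] [Module ℝ E]
    [TopologicalSpace E] [IsTopologicalAddGroup E] [ContinuousSMul ℝ E] [LocallyConvexSpace ℝ E]
    {ι : Type*} [Finite ι] {W : ι → Submodule ℝ E} (hclosed : ∀ i, IsClosed (W i : Set E))
    (hW : ∀ i, 2 < Module.rank ℝ (E ⧸ W i)) : IsSimplyConnected {x | ∀ i, x ∉ W i} := by
  have hopen : IsOpen {x | ∀ i, x ∉ W i} := by
    rw [ofPred_forall]
    exact isOpen_iInter_of_finite fun i ↦ (hclosed i).isOpen_compl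
  obtain ⟨x, hx⟩ := exists_forall_notMem_sup_span_pair hW (finite_singleton ((0 : E), (0 : E)))
  refine isSimplyConnected_of_forall_exists_segment_subset hopen
    ⟨x, fun i hxi ↦ hx i _ rfl (mem_sup_left hxi)⟩ fun s hsU ⟨F, hF, hsF⟩ ↦ ?_
  obtain ⟨p, hp⟩ := exists_forall_notMem_sup_span_pair hW hF
  refine ⟨p, fun z hz y hy i ↦ ?_⟩
  obtain ⟨e, he, hze⟩ := mem_iUnion₂.1 (hsF hz)
  obtain ⟨a, -, rfl⟩ := segment_eq_image_lineMap ℝ p z ▸ hy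
  exact lineMap_notMem_of_notMem_sup (hp i e he) (segment_subset_span_pair _ _ hze) (hsU hz i) a

end SubspaceArrangement

section Configurations

variable {ι E : Type*}

/-- The ordered configurations of `ι`-labelled pairwise distinct points of `E`. -/
abbrev OrderedConfiguration (ι E : Type*) : Type _ := {x : ι → E // Function.Injective x}

/-- Permutations of the labels act by `σ • x = x ∘ σ⁻¹`; the inverse makes this a left action. -/
instance : MulAction (Equiv.Perm ι) (OrderedConfiguration ι E) where
  smul σ x := ⟨x.1 ∘ ⇑σ⁻¹, x.2.comp σ⁻¹.injective⟩
  one_smul _ := rfl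
  mul_smul _ _ _ := rfl

theorem perm_smul_apply (σ : Equiv.Perm ι) (x : OrderedConfiguration ι E) (i : ι) :
    (σ • x).1 i = x.1 (σ⁻¹ i) := rfl

/-- The unordered configurations of pairwise distinct points of `E` labelled by `ι` up to
permutation, with the quotient topology. -/
abbrev UnorderedConfiguration (ι E : Type*) : Type _ :=
  MulAction.orbitRel.Quotient (Equiv.Perm ι) (OrderedConfiguration ι E)

theorem configSetoid_eq_orbitRel (d N : ℕ) :
    configSetoid d N =
      MulAction.orbitRel (Equiv.Perm (Fin N)) (OrderedConfiguration (Fin N) (Fin d → ℝ)) := by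
  ext x y
  rw [Setoid.comm', MulAction.orbitRel_apply]
  constructor
  · rintro ⟨σ, hσ⟩
    exact ⟨σ⁻¹, Subtype.ext hσ.symm⟩
  · rintro ⟨σ, rfl⟩
    exact ⟨σ⁻¹, rfl⟩

section Covering

variable [TopologicalSpace E]

instance : ContinuousConstSMul (Equiv.Perm ι) (OrderedConfiguration ι E) where
  continuous_const_smul σ := by
    refine .subtype_mk (continuous_pi fun i ↦ ?_) _
    exact (continuous_apply (σ⁻¹ i)).comp continuous_subtype_val

theorem exists_nhds_forall_perm_smul_inter_nonempty [Finite ι] [T2Space E]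
    (x : OrderedConfiguration ι E) :
    ∃ U ∈ 𝓝 x, ∀ σ : Equiv.Perm ι, ((σ • ·) '' U ∩ U).Nonempty → σ = 1 := by
  obtain ⟨O, hO, hdisj⟩ :=
    (pairwise_disjoint_nhds.comp_of_injective x.2).exists_mem_filter_of_disjoint
  refine ⟨{y | ∀ i, y.1 i ∈ O i}, ?_, ?_⟩
  · refine Filter.eventually_all.2 fun i ↦ ?_
    exact ((continuous_apply i).comp continuous_subtype_val).continuousAt (hO i)
  · rintro σ ⟨_, ⟨y, hy, rfl⟩, hσy⟩
    ext i
    by_contra hne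
    have hmem : y.1 i ∈ O (σ i) := by simpa [perm_smul_apply] using hσy (σ i)
    exact (hdisj hne).notMem_of_mem_left hmem (hy i)

theorem isQuotientCoveringMap_unorderedConfiguration [Finite ι] [T2Space E] :
    IsQuotientCoveringMap (Quotient.mk (MulAction.orbitRel _ _) :
      OrderedConfiguration ι E → UnorderedConfiguration ι E) (Equiv.Perm ι) where
  __ := isQuotientMap_quotient_mk'
  __ := (inferInstance : ContinuousConstSMul (Equiv.Perm ι) (OrderedConfiguration ι E))
  apply_eq_iff_mem_orbit := Quotient.eq''
  disjoint := exists_nhds_forall_perm_smul_inter_nonempty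

theorem nonempty_fundamentalGroup_unorderedConfiguration_mulEquiv_perm [Finite ι] [T2Space E]
    [SimplyConnectedSpace (OrderedConfiguration ι E)] (X : UnorderedConfiguration ι E) :
    Nonempty (FundamentalGroup (UnorderedConfiguration ι E) X ≃* Equiv.Perm ι) := by
  obtain ⟨x, hx⟩ := Quotient.exists_rep X
  exact ⟨(isQuotientCoveringMap_unorderedConfiguration.fundamentalGroupEquiv ⟨x, hx⟩).trans
    (MulEquiv.inv' (Equiv.Perm ι)).symm⟩

end Covering

variable [AddCommGroup E] [Module ℝ E]

variable (E) in
/-- The diagonal subspace of `ι → E` on which the points labelled `i` and `j` collide. -/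
def collisionSubspace (i j : ι) : Submodule ℝ (ι → E) :=
  (LinearMap.proj i : (ι → E) →ₗ[ℝ] E).eqLocus (LinearMap.proj j)

theorem mem_collisionSubspace {i j : ι} {x : ι → E} : x ∈ collisionSubspace E i j ↔ x i = x j :=
  Iff.rfl

theorem two_lt_rank_quotient_collisionSubspace (hE : 2 < Module.rank ℝ E) {i j : ι} (hij : i ≠ j) :
    2 < Module.rank ℝ ((ι → E) ⧸ collisionSubspace E i j) := by
  classical
  let f := (LinearMap.proj i : (ι → E) →ₗ[ℝ] E) - LinearMap.proj j
  have hf : Function.Surjective f := fun v ↦ ⟨Pi.single i v, by simp [f, hij.symm]⟩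
  rw [collisionSubspace, LinearMap.eqLocus_eq_ker_sub, ← Cardinal.lift_lt,
    (f.quotKerEquivOfSurjective hf).lift_rank_eq]
  simpa using hE

theorem setOf_injective_eq_setOf_forall_notMem_collisionSubspace :
    {x : ι → E | Function.Injective x} =
      {x | ∀ q : {q : ι × ι // q.1 ≠ q.2}, x ∉ collisionSubspace E q.1.1 q.1.2} := by
  ext x
  simp [Function.injective_iff_pairwise_ne, Pairwise, mem_collisionSubspace]

variable [TopologicalSpace E] [T2Space E]

theorem isClosed_collisionSubspace (i j : ι) :
    IsClosed (collisionSubspace E i j : Set (ι → E)) :=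
  isClosed_eq (continuous_apply i) (continuous_apply j)

theorem simplyConnectedSpace_orderedConfiguration [Finite ι] [IsTopologicalAddGroup E]
    [ContinuousSMul ℝ E] [LocallyConvexSpace ℝ E] (hE : 2 < Module.rank ℝ E) :
    SimplyConnectedSpace (OrderedConfiguration ι E) := by
  have hcompl : IsSimplyConnected {x : ι → E | Function.Injective x} := by
    rw [setOf_injective_eq_setOf_forall_notMem_collisionSubspace]
    exact isSimplyConnected_setOf_forall_notMem (fun q ↦ isClosed_collisionSubspace q.1.1 q.1.2)
      fun q ↦ two_lt_rank_quotient_collisionSubspace hE q.2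
  exact hcompl.simplyConnectedSpace

end Configurations

theorem configSpace_pi1_symmetric_general {ι E : Type*} [Finite ι] [AddCommGroup E] [Module ℝ E]
    [TopologicalSpace E] [T2Space E] [IsTopologicalAddGroup E] [ContinuousSMul ℝ E]
    [LocallyConvexSpace ℝ E] (hE : 2 < Module.rank ℝ E) (X : UnorderedConfiguration ι E) :
    Nonempty (FundamentalGroup (UnorderedConfiguration ι E) X ≃* Equiv.Perm ι) :=
  have := simplyConnectedSpace_orderedConfiguration (ι := ι) hE
  nonempty_fundamentalGroup_unorderedConfiguration_mulEquiv_perm X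

/-- For `d ≥ 3`, the fundamental group of the unordered configuration space of `N` distinct
points in `ℝ^d`, based at any point, is isomorphic to the symmetric group `S_N`. -/
theorem configSpace_pi1_symmetric (d N : ℕ) (hd : 3 ≤ d) (hN : 1 ≤ N)
    (X : ConfigSpace d N) :
    Nonempty (FundamentalGroup (ConfigSpace d N) X ≃* Equiv.Perm (Fin N)) := by
  revert X
  unfold ConfigSpace
  rw [configSetoid_eq_orbitRel]
  exact configSpace_pi1_symmetric_general (by rw [rank_fin_fun]; exact_mod_cast hd)
end

section
/- (Upper bound for the abelian anyon energy on the unit square.) Let N ≥ 2 and let α be a real number with 0 ≤ α < (2πN)^{−1}. Then for every ε > 0 there exists a smooth function Φ : (ℝ²)^N → ℂ, compactly supported away from the fat diagonal △, symmetric under permutations of the N coordinates (Φ(x∘σ) = Φ(x) for all σ ∈ S_N), with ∫_{Q₀^N} |Φ|² = 1 where Q₀ = [0,1]², such that ∫_{Q₀^N} ∑_{j=1}^N ‖(−i∇_j + A_j^α(x)) Φ(x)‖² dx ≤ 2πN(N−1)α · (1 + (20/3)π(N−2)α)/(1 − 2παN)² + ε. In other words, the Neumann N-anyon ground-state energy on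 the unit square with statistics parameter α is at most 2πN(N−1)α(1 + (20/3)π(N−2)α)/(1 − 2παN)². -/
open MeasureTheory

noncomputable section

/-- Rotation of a planar vector by 90 degrees: `(v₁, v₂)^⊥ = (−v₂, v₁)`. -/
def perp2 (v : Fin 2 → ℝ) : Fin 2 → ℝ := ![-(v 1), v 0]

/-- The squared Euclidean norm of a planar vector. -/
def normSq2 (v : Fin 2 → ℝ) : ℝ := v 0 ^ 2 + v 1 ^ 2

/-- The `p`-th component of the Aharonov–Bohm-type magnetic potential felt by particle `j`:
`A_j^α(x) = α ∑_{k≠j} (x_j − x_k)^⊥ / |x_j − x_k|²`. -/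
def abPotential (N : ℕ) (α : ℝ) (j : Fin N) (p : Fin 2)
    (x : Fin N → Fin 2 → ℝ) : ℝ :=
  α * ∑ k ∈ Finset.univ.erase j, perp2 (x j - x k) p / normSq2 (x j - x k)

/-- The fat diagonal in `(ℝ²)^N`. -/
def fatDiagonal (N : ℕ) : Set (Fin N → Fin 2 → ℝ) :=
  {x | ∃ j k, j ≠ k ∧ x j = x k}

/-- The configurations with all `N` particles inside the unit square `Q₀ = [0,1]²`. -/
def unitSquareConfigs (N : ℕ) : Set (Fin N → Fin 2 → ℝ) :=
  {x | ∀ j p, x j p ∈ Set.Icc (0 : ℝ) 1}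

/-!
The trial state is a Dyson–Jastrow product `∏_{j<k} f(x_j - x_k)`, where `f(v)` is a smooth
approximation of `min ((|v|² / 2)^{β/2}) 1` vanishing near `v = 0`, with `β` slightly above `α`.

The magnetic gradient in `x_j` is the sum over `k ≠ j` of the two-body magnetic gradient of
`f(x_j - x_k)`, times the product of `f` over all the other pairs. In its squared norm, each of the
`N - 1` diagonal terms contributes `∫ |(-i∇ + α v^⊥/|v|²) f|² ≤ 2πβ`, since
`|(-i∇ + α v^⊥/|v|²) f|² ≤ 2β² (|v|²/2)^β / |v|²`, and each of the `(N - 1)(N - 2)` cross terms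
contributes `(√2 β (π + 2))² ≤ (40/3) π² β²`. Both use the bound `f ≤ 1` to drop further factors
involving the particles being integrated out. Discarding the factors of two particles altogether
raises the squared norm of the product by at most `(1 - 2πβN)⁻²`, because
`1 - ∏ f² ≤ ∑ (1 - f²)` and `∫ (1 - f²) ≤ 2πβ`. Finally `β` is sent to `α`.
-/

open scoped ENNReal ContDiff

/-- The derivative of `softClamp η`: a smooth cutoff which is `1` on `[2η, 1]` and vanishes off
`[η, 1 + η]`. -/
def softClampDeriv (η s : ℝ) : ℝ :=
  Real.smoothTransition ((s - η) / η) * Real.smoothTransition ((1 + η - s) / η)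

/-- A smooth approximation of `u ↦ min u 1`, off by at most `2η` and zero on `(-∞, η]`. -/
def softClamp (η u : ℝ) : ℝ := ∫ s in η..u, softClampDeriv η s

section SoftClamp

variable {η : ℝ}

lemma contDiff_softClampDeriv (η : ℝ) : ContDiff ℝ ∞ (softClampDeriv η) :=
  (Real.smoothTransition.contDiff.comp (by fun_prop)).mul
    (Real.smoothTransition.contDiff.comp (by fun_prop))

lemma softClampDeriv_nonneg (η s : ℝ) : 0 ≤ softClampDeriv η s :=
  mul_nonneg (Real.smoothTransition.nonneg _) (Real.smoothTransition.nonneg _)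

lemma softClampDeriv_le_one (η s : ℝ) : softClampDeriv η s ≤ 1 :=
  mul_le_one₀ (Real.smoothTransition.le_one _) (Real.smoothTransition.nonneg _)
    (Real.smoothTransition.le_one _)

lemma hasDerivAt_softClamp (η u : ℝ) : HasDerivAt (softClamp η) (softClampDeriv η u) u :=
  ((contDiff_softClampDeriv η).continuous.integral_hasStrictDerivAt η u).hasDerivAt

lemma deriv_softClamp (η : ℝ) : deriv (softClamp η) = softClampDeriv η :=
  funext fun u => (hasDerivAt_softClamp η u).deriv

lemma differentiable_softClamp (η : ℝ) : Differentiable ℝ (softClamp η) :=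
  fun u => (hasDerivAt_softClamp η u).differentiableAt

lemma contDiff_softClamp (η : ℝ) : ContDiff ℝ ∞ (softClamp η) := by
  rw [contDiff_infty_iff_deriv, deriv_softClamp]
  exact ⟨differentiable_softClamp η, contDiff_softClampDeriv η⟩

lemma monotone_softClamp (η : ℝ) : Monotone (softClamp η) :=
  monotone_of_deriv_nonneg (differentiable_softClamp η)
    fun u => by rw [deriv_softClamp]; exact softClampDeriv_nonneg η u

lemma monotone_sub_softClamp (η : ℝ) : Monotone fun u => u - softClamp η u := by
  have hderiv (u : ℝ) : HasDerivAt (fun u => u - softClamp η u) (1 - softClampDeriv η u) u :=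
    (hasDerivAt_id u).sub (hasDerivAt_softClamp η u)
  refine monotone_of_deriv_nonneg (fun u => (hderiv u).differentiableAt) fun u => ?_
  rw [(hderiv u).deriv]
  exact sub_nonneg.2 (softClampDeriv_le_one η u)

@[simp] lemma softClamp_self (η : ℝ) : softClamp η η = 0 := intervalIntegral.integral_same

lemma softClamp_of_le (hη : 0 ≤ η) {u : ℝ} (hu : u ≤ η) : softClamp η u = 0 := by
  have hzero : Set.EqOn (softClampDeriv η) 0 (Set.uIcc η u) := by
    intro s hs
    rw [Set.uIcc_of_ge hu] at hs
    exact mul_eq_zero_of_left (Real.smoothTransition.zero_of_nonpos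
      (div_nonpos_of_nonpos_of_nonneg (sub_nonpos.2 hs.2) hη)) _
  rw [softClamp, intervalIntegral.integral_congr hzero]
  exact intervalIntegral.integral_zero

lemma softClamp_nonneg (hη : 0 ≤ η) (u : ℝ) : 0 ≤ softClamp η u := by
  rcases le_total u η with hu | hu
  · rw [softClamp_of_le hη hu]
  · simpa using monotone_softClamp η hu

lemma softClamp_le_self (hη : 0 ≤ η) {u : ℝ} (hu : 0 ≤ u) : softClamp η u ≤ u := by
  simpa [softClamp_of_le hη hη] using monotone_sub_softClamp η hu

lemma softClamp_le_one (hη : 0 ≤ η) (u : ℝ) : softClamp η u ≤ 1 := by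
  have hplateau : softClamp η (1 + η) ≤ 1 := by
    linarith [monotone_sub_softClamp η (by linarith : η ≤ 1 + η), softClamp_self η]
  rcases le_total u (1 + η) with hu | hu
  · exact (monotone_softClamp η hu).trans hplateau
  · have hzero : Set.EqOn (softClampDeriv η) 0 (Set.uIcc (1 + η) u) := by
      intro s hs
      rw [Set.uIcc_of_le hu] at hs
      exact mul_eq_zero_of_right _ (Real.smoothTransition.zero_of_nonpos
        (div_nonpos_of_nonpos_of_nonneg (sub_nonpos.2 hs.1) hη))
    have hcont := (contDiff_softClampDeriv η).continuous
    have hdiff : softClamp η u - softClamp η (1 + η) = ∫ s in (1 + η)..u, softClampDeriv η s :=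
      intervalIntegral.integral_interval_sub_left (hcont.intervalIntegrable _ _)
        (hcont.intervalIntegrable _ _)
    rw [intervalIntegral.integral_congr hzero] at hdiff
    simp only [Pi.zero_apply, intervalIntegral.integral_zero] at hdiff
    linarith

lemma min_one_sub_le_softClamp (hη : 0 < η) (u : ℝ) : min u 1 - 2 * η ≤ softClamp η u := by
  refine le_trans ?_ (monotone_softClamp η (min_le_left u 1))
  rcases le_total (min u 1) (2 * η) with h | h
  · linarith [softClamp_nonneg hη.le (min u 1)]
  · have hone : Set.EqOn (softClampDeriv η) 1 (Set.uIcc (2 * η) (min u 1)) := by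
      intro s hs
      rw [Set.uIcc_of_le h] at hs
      have hs1 : s ≤ 1 := hs.2.trans (min_le_right u 1)
      rw [softClampDeriv, Real.smoothTransition.one_of_one_le, Real.smoothTransition.one_of_one_le]
      · exact mul_one 1
      · rw [le_div_iff₀ hη]; linarith
      · rw [le_div_iff₀ hη]; linarith [hs.1]
    have hcont := (contDiff_softClampDeriv η).continuous
    have hdiff : softClamp η (min u 1) - softClamp η (2 * η) =
        ∫ s in (2 * η)..(min u 1), softClampDeriv η s :=
      intervalIntegral.integral_interval_sub_left (hcont.intervalIntegrable _ _)
        (hcont.intervalIntegrable _ _)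
    rw [intervalIntegral.integral_congr hone] at hdiff
    simp only [Pi.one_apply, intervalIntegral.integral_const, smul_eq_mul, mul_one] at hdiff
    linarith [softClamp_nonneg hη.le (2 * η)]

end SoftClamp

section Pairs

variable {ι : Type*} [DecidableEq ι] {S T : Finset ι} {j k : ι}

/-- The unordered pairs of distinct elements of `S`. -/
def pairs (S : Finset ι) : Finset (Sym2 ι) := {e ∈ S.sym2 | ¬e.IsDiag}

@[simp] lemma mk_mem_pairs : s(j, k) ∈ pairs S ↔ (j ∈ S ∧ k ∈ S) ∧ j ≠ k := by
  simp [pairs]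

lemma pairs_mono (hST : S ⊆ T) : pairs S ⊆ pairs T :=
  Finset.filter_subset_filter _ (Finset.sym2_mono hST)

lemma pairs_subset_erase_mk [Fintype ι] (j : ι) (hk : k ∉ S) :
    pairs S ⊆ (pairs Finset.univ).erase s(j, k) := fun _ he =>
  Finset.mem_erase.2 ⟨fun hjk => hk (mk_mem_pairs.1 (hjk ▸ he)).1.2,
    pairs_mono (Finset.subset_univ S) he⟩

lemma pairs_insert (hj : j ∉ S) : pairs (insert j S) = pairs S ∪ S.image (s(j, ·)) := by
  ext e
  induction e with | _ a b
  simp only [mk_mem_pairs, Finset.mem_insert, Finset.mem_union, Finset.mem_image, Sym2.eq_iff]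
  grind

lemma disjoint_pairs_image_mk (hj : j ∉ S) : Disjoint (pairs S) (S.image (s(j, ·))) := by
  rw [Finset.disjoint_left]
  intro e he hej
  obtain ⟨k, -, rfl⟩ := Finset.mem_image.1 hej
  exact hj (mk_mem_pairs.1 he).1.1

@[to_additive]
lemma prod_pairs_insert {M : Type*} [CommMonoid M] (hj : j ∉ S) (g : Sym2 ι → M) :
    ∏ e ∈ pairs (insert j S), g e = (∏ e ∈ pairs S, g e) * ∏ k ∈ S, g s(j, k) := by
  rw [pairs_insert hj, Finset.prod_union (disjoint_pairs_image_mk hj),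
    Finset.prod_image fun _ _ _ _ h => Sym2.congr_right.1 h]

lemma prod_pairs_univ_map [Fintype ι] {M : Type*} [CommMonoid M] (σ : Equiv.Perm ι)
    (g : Sym2 ι → M) :
    ∏ e ∈ pairs Finset.univ, g (e.map σ) = ∏ e ∈ pairs Finset.univ, g e := by
  have hbij : Function.Bijective (Sym2.map σ) :=
    Finite.injective_iff_bijective.1 (Sym2.map.injective σ.injective)
  refine Finset.prod_bijective _ hbij (fun e => ?_) fun _ _ => rfl
  induction e with | _ a b
  simp

end Pairs

lemma one_le_prod_add_sum_one_sub {ι : Type*} (S : Finset ι) {a : ι → ℝ}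
    (ha : ∀ i, a i ∈ Set.Icc 0 1) :
    1 ≤ ∏ i ∈ S, a i + ∑ i ∈ S, (1 - a i) := by
  classical
  induction S using Finset.induction_on with
  | empty => simp
  | insert i S hi ih =>
    have hprod : ∏ i ∈ S, a i ≤ 1 := Finset.prod_le_one (fun i _ => (ha i).1) fun i _ => (ha i).2
    rw [Finset.prod_insert hi, Finset.sum_insert hi]
    nlinarith [(ha i).1, (ha i).2]

section Jastrow

variable {ι E : Type*}

/-- The Jastrow product of the two-body weight `w` over the set `P` of unordered pairs. -/
def jastrow (w : Sym2 E → ℝ) (P : Finset (Sym2 ι)) (x : ι → E) : ℝ := ∏ e ∈ P, w (e.map x)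

variable {w : Sym2 E → ℝ} {P P' : Finset (Sym2 ι)}

lemma jastrow_nonneg (hw : ∀ e, 0 ≤ w e) (P : Finset (Sym2 ι)) (x : ι → E) :
    0 ≤ jastrow w P x := Finset.prod_nonneg fun _ _ => hw _

lemma jastrow_le_one (hw : ∀ e, w e ∈ Set.Icc 0 1) (P : Finset (Sym2 ι)) (x : ι → E) :
    jastrow w P x ≤ 1 := Finset.prod_le_one (fun _ _ => (hw _).1) fun _ _ => (hw _).2

lemma jastrow_anti (hw : ∀ e, w e ∈ Set.Icc 0 1) (hP : P ⊆ P') (x : ι → E) :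
    jastrow w P' x ≤ jastrow w P x :=
  Finset.prod_le_prod_of_subset_of_le_one hP (fun _ _ => (hw _).1) fun _ _ _ => (hw _).2

lemma enorm_jastrow_anti (hw : ∀ e, w e ∈ Set.Icc 0 1) (hP : P ⊆ P') (x : ι → E) :
    ‖jastrow w P' x‖ₑ ≤ ‖jastrow w P x‖ₑ := by
  simpa only [Real.enorm_of_nonneg (jastrow_nonneg (fun e => (hw e).1) _ _)] using
    ENNReal.ofReal_le_ofReal (jastrow_anti hw hP x)

lemma measurable_jastrow [MeasurableSpace E] (hw : Measurable fun p : E × E => w s(p.1, p.2))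
    (P : Finset (Sym2 ι)) : Measurable (jastrow w P) := by
  refine Finset.measurable_fun_prod P fun e _ => ?_
  induction e with | _ a b
  exact hw.comp (g := fun p : E × E => w s(p.1, p.2)) (f := fun x : ι → E => (x a, x b))
    (by fun_prop)

variable [DecidableEq ι]

lemma dependsOn_jastrow_pairs (w : Sym2 E → ℝ) (S : Finset ι) :
    DependsOn (jastrow w (pairs S)) S := by
  intro x y hxy
  refine Finset.prod_congr rfl fun e he => ?_
  induction e with | _ a b
  obtain ⟨⟨ha, hb⟩, -⟩ := mk_mem_pairs.1 he
  rw [Sym2.map_mk, Sym2.map_mk, hxy a ha, hxy b hb]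

lemma dependsOn_enorm_jastrow_pairs_sq (w : Sym2 E → ℝ) {S : Finset ι} {k : ι} (hk : k ∉ S) :
    DependsOn (fun x : ι → E => ‖jastrow w (pairs S) x‖ₑ ^ 2) {k}ᶜ := fun _ _ hxy => by
  dsimp only
  rw [dependsOn_jastrow_pairs w S fun i hi => hxy i (ne_of_mem_of_not_mem hi hk)]

lemma jastrow_pairs_univ_comp_perm [Fintype ι] (σ : Equiv.Perm ι) (x : ι → E) :
    jastrow w (pairs Finset.univ) (x ∘ σ) = jastrow w (pairs Finset.univ) x := by
  simp only [jastrow, ← Sym2.map_map]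
  exact prod_pairs_univ_map σ fun e => w (e.map x)

lemma enorm_jastrow_pairs_sq_le (hw : ∀ e, w e ∈ Set.Icc 0 1) {S : Finset ι} {j : ι}
    (hj : j ∉ S) (x : ι → E) :
    ‖jastrow w (pairs S) x‖ₑ ^ 2 ≤ ‖jastrow w (pairs (insert j S)) x‖ₑ ^ 2 +
      ∑ k ∈ S, ENNReal.ofReal (1 - w s(x k, x j) ^ 2) * ‖jastrow w (pairs S) x‖ₑ ^ 2 := by
  have hsq (e : Sym2 E) : w e ^ 2 ∈ Set.Icc 0 1 :=
    ⟨sq_nonneg _, pow_le_one₀ (hw e).1 (hw e).2⟩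
  have henorm (P : Finset (Sym2 ι)) :
      ‖jastrow w P x‖ₑ ^ 2 = ENNReal.ofReal (jastrow w P x ^ 2) := by
    rw [Real.enorm_of_nonneg (jastrow_nonneg (fun e => (hw e).1) _ x),
      ENNReal.ofReal_pow (jastrow_nonneg (fun e => (hw e).1) _ x)]
  have hnonneg (k : ι) : 0 ≤ 1 - w s(x k, x j) ^ 2 := sub_nonneg.2 (hsq _).2
  simp only [henorm]
  rw [← Finset.sum_mul, ← ENNReal.ofReal_sum_of_nonneg fun k _ => hnonneg k,
    ← ENNReal.ofReal_mul (Finset.sum_nonneg fun k _ => hnonneg k),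
    ← ENNReal.ofReal_add (sq_nonneg _)
      (mul_nonneg (Finset.sum_nonneg fun k _ => hnonneg k) (sq_nonneg _))]
  refine ENNReal.ofReal_le_ofReal ?_
  have hinsert : jastrow w (pairs (insert j S)) x =
      jastrow w (pairs S) x * ∏ k ∈ S, w s(x k, x j) := by
    simp only [jastrow, prod_pairs_insert hj, Sym2.map_mk, Sym2.eq_swap]
  rw [hinsert, mul_pow, ← Finset.prod_pow, mul_comm (∑ k ∈ S, _), ← mul_add]
  exact le_mul_of_one_le_right (sq_nonneg _) (one_le_prod_add_sum_one_sub S fun k => hsq _)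

lemma enorm_jastrow_erase_smul_le [Fintype ι] {V : Type*} [NormedAddCommGroup V] [NormedSpace ℝ V]
    (hw : ∀ e, w e ∈ Set.Icc 0 1) {S : Finset ι} {j k : ι} (hk : k ∉ S) (v : V) (x : ι → E) :
    ‖jastrow w ((pairs Finset.univ).erase s(j, k)) x • v‖ₑ ≤ ‖v‖ₑ * ‖jastrow w (pairs S) x‖ₑ := by
  rw [enorm_smul, mul_comm]
  exact mul_le_mul_right (enorm_jastrow_anti hw (pairs_subset_erase_mk j hk) x) _

end Jastrow

section IntegrateOut

variable {ι E : Type*} [Fintype ι] [MeasurableSpace E] {ν : Measure E} [IsProbabilityMeasure ν]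
  {j k : ι}

lemma lintegral_pi_eq_lintegral_update [DecidableEq ι] (k : ι) {f : (ι → E) → ℝ≥0∞}
    (hf : Measurable f) :
    ∫⁻ x, f x ∂Measure.pi (fun _ => ν) =
      ∫⁻ x, ∫⁻ y, f (Function.update x k y) ∂ν ∂Measure.pi (fun _ => ν) := by
  have hinner : Measurable fun x => ∫⁻ y, f (Function.update x k y) ∂ν := by
    simpa only [lmarginal_singleton] using hf.lmarginal (fun _ => ν) (s := {k})
  obtain ⟨a⟩ := nonempty_of_isProbabilityMeasure ν
  let x₀ : ι → E := fun _ => a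
  rw [lintegral_eq_lmarginal_univ x₀, lintegral_eq_lmarginal_univ x₀,
    lmarginal_erase' f hf (Finset.mem_univ k), lmarginal_erase' _ hinner (Finset.mem_univ k)]
  simp only [Function.update_idem, lintegral_const, measure_univ, mul_one]

lemma lintegral_pair_mul_le (hjk : j ≠ k) {K : E → E → ℝ≥0∞} (hK : Measurable K.uncurry)
    {C : ℝ≥0∞} (hC : ∀ᵐ a ∂ν, ∫⁻ b, K a b ∂ν ≤ C) {H : (ι → E) → ℝ≥0∞} (hH : Measurable H)
    (hHk : DependsOn H {k}ᶜ) :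
    ∫⁻ x, K (x j) (x k) * H x ∂Measure.pi (fun _ => ν) ≤
      C * ∫⁻ x, H x ∂Measure.pi (fun _ => ν) := by
  classical
  have hKjk : Measurable fun x : ι → E => K (x j) (x k) :=
    hK.comp (f := fun x : ι → E => (x j, x k)) (by fun_prop)
  have hupdate (x : ι → E) (y : E) : H (Function.update x k y) = H x :=
    hHk fun i hi => Function.update_of_ne hi y x
  rw [lintegral_pi_eq_lintegral_update k (hKjk.fun_mul hH), ← lintegral_const_mul _ hH]
  refine lintegral_mono_ae ?_
  filter_upwards [(Measure.quasiMeasurePreserving_eval (fun _ => ν) j).ae hC] with x hx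
  simp only [Function.update_self, Function.update_of_ne hjk, hupdate]
  rw [lintegral_mul_const _ hK.of_uncurry_left]
  gcongr

end IntegrateOut

section JastrowEnergy

variable {ι E : Type*} [Fintype ι] [DecidableEq ι] [MeasurableSpace E] {ν : Measure E}
  [IsProbabilityMeasure ν] {w : Sym2 E → ℝ} {S T : Finset ι} {j k : ι}

/-- The squared `L²(ν^ι)`-norm of the Jastrow product over all pairs of particles in `S`. -/
def jastrowNormSq (ν : Measure E) (w : Sym2 E → ℝ) (S : Finset ι) : ℝ≥0∞ :=
  ∫⁻ x, ‖jastrow w (pairs S) x‖ₑ ^ 2 ∂Measure.pi fun _ => ν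

lemma jastrowNormSq_le_one (hw : ∀ e, w e ∈ Set.Icc 0 1) (S : Finset ι) :
    jastrowNormSq ν w S ≤ 1 := by
  calc jastrowNormSq ν w S ≤ ∫⁻ _, 1 ∂Measure.pi fun _ : ι => ν := by
        refine lintegral_mono fun x => pow_le_one₀ zero_le ?_
        rw [Real.enorm_of_nonneg (jastrow_nonneg (fun e => (hw e).1) _ x)]
        exact ENNReal.ofReal_le_one.2 (jastrow_le_one hw _ x)
    _ = 1 := by simp

lemma jastrowNormSq_ne_top (hw : ∀ e, w e ∈ Set.Icc 0 1) (S : Finset ι) :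
    jastrowNormSq ν w S ≠ ⊤ := ne_top_of_le_ne_top ENNReal.one_ne_top (jastrowNormSq_le_one hw S)

lemma jastrowNormSq_le_insert (hw : ∀ e, w e ∈ Set.Icc 0 1)
    (hwm : Measurable fun p : E × E => w s(p.1, p.2)) {I : ℝ≥0∞}
    (hI : ∀ᵐ a ∂ν, ∫⁻ b, ENNReal.ofReal (1 - w s(a, b) ^ 2) ∂ν ≤ I) (hj : j ∉ S) :
    jastrowNormSq ν w S ≤
      jastrowNormSq ν w (insert j S) + Fintype.card ι * I * jastrowNormSq ν w S := by
  have hjm (P : Finset (Sym2 ι)) := measurable_jastrow hwm P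
  have hK : Measurable (Function.uncurry fun a b => ENNReal.ofReal (1 - w s(a, b) ^ 2)) :=
    ((hwm.pow_const 2).const_sub 1).ennreal_ofReal
  have hKm (k : ι) : Measurable fun x : ι → E => ENNReal.ofReal (1 - w s(x k, x j) ^ 2) :=
    hK.comp (f := fun x : ι → E => (x k, x j)) (by fun_prop)
  have hpair (k : ι) (hk : k ∈ S) :
      ∫⁻ x, ENNReal.ofReal (1 - w s(x k, x j) ^ 2) * ‖jastrow w (pairs S) x‖ₑ ^ 2
        ∂Measure.pi (fun _ => ν) ≤ I * jastrowNormSq ν w S :=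
    lintegral_pair_mul_le (ne_of_mem_of_not_mem hk hj) hK hI (by fun_prop)
      (dependsOn_enorm_jastrow_pairs_sq w hj)
  calc jastrowNormSq ν w S
      ≤ ∫⁻ x, (‖jastrow w (pairs (insert j S)) x‖ₑ ^ 2 + ∑ k ∈ S,
          ENNReal.ofReal (1 - w s(x k, x j) ^ 2) * ‖jastrow w (pairs S) x‖ₑ ^ 2)
          ∂Measure.pi (fun _ => ν) := lintegral_mono (enorm_jastrow_pairs_sq_le hw hj)
    _ ≤ jastrowNormSq ν w (insert j S) + ∑ _k ∈ S, I * jastrowNormSq ν w S := by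
        rw [lintegral_add_left (by fun_prop), lintegral_finsetSum _ fun _ _ =>
          (hKm _).fun_mul (by fun_prop)]
        exact add_le_add_right (Finset.sum_le_sum hpair) _
    _ ≤ jastrowNormSq ν w (insert j S) + Fintype.card ι * I * jastrowNormSq ν w S := by
        rw [Finset.sum_const, nsmul_eq_mul, mul_assoc]
        gcongr
        exact S.card_le_univ

lemma pow_mul_jastrowNormSq_le_union (hw : ∀ e, w e ∈ Set.Icc 0 1)
    (hwm : Measurable fun p : E × E => w s(p.1, p.2)) {I : ℝ≥0∞}
    (hI : ∀ᵐ a ∂ν, ∫⁻ b, ENNReal.ofReal (1 - w s(a, b) ^ 2) ∂ν ≤ I) (hST : Disjoint S T) :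
    (1 - Fintype.card ι * I) ^ T.card * jastrowNormSq ν w S ≤ jastrowNormSq ν w (S ∪ T) := by
  induction T using Finset.induction_on with
  | empty => simp
  | insert j T hj ih =>
    obtain ⟨hjS, hST⟩ := Finset.disjoint_insert_right.1 hST
    have hjST : j ∉ S ∪ T := by simp [hjS, hj]
    rw [Finset.card_insert_of_notMem hj, pow_succ', mul_assoc, Finset.union_insert]
    refine (mul_le_mul_right (ih hST) _).trans ?_
    rw [ENNReal.sub_mul fun _ _ => jastrowNormSq_ne_top hw _, one_mul, tsub_le_iff_right]
    exact jastrowNormSq_le_insert hw hwm hI hjST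

lemma jastrowNormSq_univ_pos (hw : ∀ e, w e ∈ Set.Icc 0 1)
    (hwm : Measurable fun p : E × E => w s(p.1, p.2)) {I : ℝ≥0∞}
    (hI : ∀ᵐ a ∂ν, ∫⁻ b, ENNReal.ofReal (1 - w s(a, b) ^ 2) ∂ν ≤ I)
    (hI1 : Fintype.card ι * I < 1) : 0 < jastrowNormSq ν w (Finset.univ : Finset ι) := by
  have hempty : jastrowNormSq ν w (∅ : Finset ι) = 1 := by simp [jastrowNormSq, jastrow, pairs]
  have hunion := pow_mul_jastrowNormSq_le_union hw hwm hI
    (Finset.disjoint_empty_left (Finset.univ : Finset ι))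
  rw [hempty, mul_one, Finset.empty_union] at hunion
  exact (ENNReal.pow_pos (tsub_pos_of_lt hI1) _).trans_le hunion

lemma jastrowNormSq_compl_pair_le (hw : ∀ e, w e ∈ Set.Icc 0 1)
    (hwm : Measurable fun p : E × E => w s(p.1, p.2)) {I : ℝ≥0∞}
    (hI : ∀ᵐ a ∂ν, ∫⁻ b, ENNReal.ofReal (1 - w s(a, b) ^ 2) ∂ν ≤ I)
    (hI1 : Fintype.card ι * I < 1) (hjk : j ≠ k) :
    jastrowNormSq ν w ({j, k} : Finset ι)ᶜ ≤
      jastrowNormSq ν w (Finset.univ : Finset ι) / (1 - Fintype.card ι * I) ^ 2 := by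
  have hunion := pow_mul_jastrowNormSq_le_union hw hwm hI
    (disjoint_compl_left : Disjoint ({j, k} : Finset ι)ᶜ {j, k})
  rw [Finset.card_pair hjk, Finset.union_comm, Finset.union_compl] at hunion
  rwa [ENNReal.le_div_iff_mul_le (Or.inl (ENNReal.pow_pos (tsub_pos_of_lt hI1) 2).ne')
    (Or.inl (ENNReal.pow_ne_top (ne_top_of_le_ne_top ENNReal.one_ne_top tsub_le_self))), mul_comm]

end JastrowEnergy

lemma enorm_sum_sq_le {ι V : Type*} [DecidableEq ι] [NormedAddCommGroup V] (s : Finset ι)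
    (v : ι → V) :
    ‖∑ k ∈ s, v k‖ₑ ^ 2 ≤ ∑ k ∈ s, (‖v k‖ₑ ^ 2 + ∑ l ∈ s.erase k, ‖v k‖ₑ * ‖v l‖ₑ) := by
  calc ‖∑ k ∈ s, v k‖ₑ ^ 2 ≤ (∑ k ∈ s, ‖v k‖ₑ) ^ 2 := by
        gcongr
        exact enorm_sum_le s v
    _ = ∑ k ∈ s, ∑ l ∈ s, ‖v k‖ₑ * ‖v l‖ₑ := by rw [sq, Finset.sum_mul_sum]
    _ = _ := Finset.sum_congr rfl fun k hk => by
        rw [sq, Finset.add_sum_erase s (fun l => ‖v k‖ₑ * ‖v l‖ₑ) hk]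

section PairGradient

variable {ι E V : Type*} [Fintype ι] [DecidableEq ι] [MeasurableSpace E] {ν : Measure E}
  [IsProbabilityMeasure ν] [NormedAddCommGroup V] [NormedSpace ℝ V] {w : Sym2 E → ℝ}
  {u : E → E → V} {C₁ C₂ D : ℝ≥0∞} {j k l : ι}

lemma lintegral_enorm_jastrow_erase_smul_sq_le (hw : ∀ e, w e ∈ Set.Icc 0 1)
    (hwm : Measurable fun p : E × E => w s(p.1, p.2))
    (hu : Measurable fun p : E × E => ‖u p.1 p.2‖ₑ)
    (hC₂ : ∀ᵐ a ∂ν, ∫⁻ b, ‖u a b‖ₑ ^ 2 ∂ν ≤ C₂) (hjk : j ≠ k) :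
    ∫⁻ x, ‖jastrow w ((pairs Finset.univ).erase s(j, k)) x • u (x j) (x k)‖ₑ ^ 2
      ∂Measure.pi (fun _ => ν) ≤ C₂ * jastrowNormSq ν w ({j, k} : Finset ι)ᶜ := by
  have hjm := measurable_jastrow hwm (pairs ({j, k} : Finset ι)ᶜ)
  calc _ ≤ ∫⁻ x, ‖u (x j) (x k)‖ₑ ^ 2 * ‖jastrow w (pairs ({j, k} : Finset ι)ᶜ) x‖ₑ ^ 2
          ∂Measure.pi (fun _ => ν) := by
        refine lintegral_mono fun x => ?_
        rw [← mul_pow]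
        exact pow_le_pow_left' (enorm_jastrow_erase_smul_le hw (by simp) _ x) 2
    _ ≤ C₂ * jastrowNormSq ν w ({j, k} : Finset ι)ᶜ :=
        lintegral_pair_mul_le (K := fun a b => ‖u a b‖ₑ ^ 2) hjk (hu.pow_const 2) hC₂
          (by fun_prop) (dependsOn_enorm_jastrow_pairs_sq w (by simp))

lemma lintegral_enorm_jastrow_erase_smul_mul_le (hw : ∀ e, w e ∈ Set.Icc 0 1)
    (hwm : Measurable fun p : E × E => w s(p.1, p.2))
    (hu : Measurable fun p : E × E => ‖u p.1 p.2‖ₑ)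
    (hC₁ : ∀ᵐ a ∂ν, ∫⁻ b, ‖u a b‖ₑ ∂ν ≤ C₁) (hjk : j ≠ k) (hjl : j ≠ l) (hkl : k ≠ l) :
    ∫⁻ x, ‖jastrow w ((pairs Finset.univ).erase s(j, k)) x • u (x j) (x k)‖ₑ *
        ‖jastrow w ((pairs Finset.univ).erase s(j, l)) x • u (x j) (x l)‖ₑ
      ∂Measure.pi (fun _ => ν) ≤ C₁ ^ 2 * jastrowNormSq ν w ({k, l} : Finset ι)ᶜ := by
  set F : (ι → E) → ℝ≥0∞ := fun x => ‖jastrow w (pairs ({k, l} : Finset ι)ᶜ) x‖ₑ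
  have hFm : Measurable F := (measurable_jastrow hwm _).enorm
  have hum : Measurable fun x : ι → E => ‖u (x j) (x l)‖ₑ :=
    hu.comp (f := fun x : ι → E => (x j, x l)) (by fun_prop)
  have hFk : DependsOn (fun x => ‖u (x j) (x l)‖ₑ * F x ^ 2) {k}ᶜ := fun x y hxy =>
    congr_arg₂ (· * ·) (by rw [hxy j hjk, hxy l hkl.symm])
      (dependsOn_enorm_jastrow_pairs_sq w (by simp) hxy)
  calc _ ≤ ∫⁻ x, ‖u (x j) (x k)‖ₑ * (‖u (x j) (x l)‖ₑ * F x ^ 2) ∂Measure.pi (fun _ => ν) := by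
        refine lintegral_mono fun x => ?_
        calc _ ≤ (‖u (x j) (x k)‖ₑ * F x) * (‖u (x j) (x l)‖ₑ * F x) :=
              mul_le_mul' (enorm_jastrow_erase_smul_le hw (by simp) _ x)
                (enorm_jastrow_erase_smul_le hw (by simp) _ x)
          _ = _ := by ring
    _ ≤ C₁ * ∫⁻ x, ‖u (x j) (x l)‖ₑ * F x ^ 2 ∂Measure.pi (fun _ => ν) :=
        lintegral_pair_mul_le (K := fun a b => ‖u a b‖ₑ) hjk hu hC₁ (by fun_prop) hFk
    _ ≤ C₁ * (C₁ * ∫⁻ x, F x ^ 2 ∂Measure.pi (fun _ => ν)) := by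
        gcongr
        exact lintegral_pair_mul_le (K := fun a b => ‖u a b‖ₑ) hjl hu hC₁ (by fun_prop)
          (dependsOn_enorm_jastrow_pairs_sq w (by simp))
    _ = _ := by rw [← mul_assoc, ← sq]; rfl

lemma lintegral_enorm_sum_jastrow_erase_smul_sq_le (hw : ∀ e, w e ∈ Set.Icc 0 1)
    (hwm : Measurable fun p : E × E => w s(p.1, p.2))
    (hu : Measurable fun p : E × E => ‖u p.1 p.2‖ₑ)
    (hC₂ : ∀ᵐ a ∂ν, ∫⁻ b, ‖u a b‖ₑ ^ 2 ∂ν ≤ C₂) (hC₁ : ∀ᵐ a ∂ν, ∫⁻ b, ‖u a b‖ₑ ∂ν ≤ C₁)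
    (hD : ∀ k l : ι, k ≠ l → jastrowNormSq ν w ({k, l} : Finset ι)ᶜ ≤ D) (j : ι) :
    ∫⁻ x, ‖∑ k ∈ Finset.univ.erase j,
        jastrow w ((pairs Finset.univ).erase s(j, k)) x • u (x j) (x k)‖ₑ ^ 2
      ∂Measure.pi (fun _ => ν) ≤
      (Fintype.card ι - 1 : ℕ) * ((C₂ + (Fintype.card ι - 2 : ℕ) * C₁ ^ 2) * D) := by
  set v : ι → (ι → E) → V := fun k x =>
    jastrow w ((pairs Finset.univ).erase s(j, k)) x • u (x j) (x k)
  have hvm (k : ι) : Measurable fun x => ‖v k x‖ₑ := by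
    simp only [v, enorm_smul]
    exact (measurable_jastrow hwm _).enorm.mul
      (hu.comp (f := fun x : ι → E => (x j, x k)) (by fun_prop))
  have hrow (k : ι) (hk : k ∈ Finset.univ.erase j) :
      ∫⁻ x, (‖v k x‖ₑ ^ 2 + ∑ l ∈ (Finset.univ.erase j).erase k, ‖v k x‖ₑ * ‖v l x‖ₑ)
        ∂Measure.pi (fun _ => ν) ≤ (C₂ + (Fintype.card ι - 2 : ℕ) * C₁ ^ 2) * D := by
    have hjk : j ≠ k := (Finset.ne_of_mem_erase hk).symm
    have hcard : ((Finset.univ.erase j).erase k).card = Fintype.card ι - 2 := by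
      rw [Finset.card_erase_of_mem hk, Finset.card_erase_of_mem (Finset.mem_univ j)]
      rfl
    rw [lintegral_add_left (by fun_prop), lintegral_finsetSum _ (by fun_prop), add_mul, mul_assoc,
      ← hcard, ← nsmul_eq_mul, ← Finset.sum_const]
    refine add_le_add ?_ (Finset.sum_le_sum fun l hl => ?_)
    · exact (lintegral_enorm_jastrow_erase_smul_sq_le hw hwm hu hC₂ hjk).trans
        (mul_le_mul_right (hD j k hjk) _)
    · obtain ⟨hlk, hlj⟩ := Finset.mem_erase.1 hl
      exact (lintegral_enorm_jastrow_erase_smul_mul_le hw hwm hu hC₁ hjk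
        (Finset.ne_of_mem_erase hlj).symm hlk.symm).trans (mul_le_mul_right (hD k l hlk.symm) _)
  calc _ ≤ ∑ k ∈ Finset.univ.erase j, ∫⁻ x, (‖v k x‖ₑ ^ 2 +
          ∑ l ∈ (Finset.univ.erase j).erase k, ‖v k x‖ₑ * ‖v l x‖ₑ) ∂Measure.pi (fun _ => ν) := by
        rw [← lintegral_finsetSum _ (by fun_prop)]
        exact lintegral_mono fun x => enorm_sum_sq_le _ fun k => v k x
    _ ≤ _ := by
        refine (Finset.sum_le_sum hrow).trans_eq ?_
        rw [Finset.sum_const, Finset.card_erase_of_mem (Finset.mem_univ j), nsmul_eq_mul]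
        rfl

end PairGradient

section PlanarIntegrals

lemma normSq2_nonneg (v : Fin 2 → ℝ) : 0 ≤ normSq2 v := by
  unfold normSq2
  positivity

@[simp] lemma normSq2_neg (v : Fin 2 → ℝ) : normSq2 (-v) = normSq2 v := by simp [normSq2]

lemma normSq2_pos {v : Fin 2 → ℝ} (hv : v ≠ 0) : 0 < normSq2 v := by
  refine (normSq2_nonneg v).lt_of_ne' fun h => hv ?_
  obtain ⟨h0, h1⟩ := (add_eq_zero_iff_of_nonneg (sq_nonneg _) (sq_nonneg _)).1 h
  ext p
  fin_cases p
  · exact pow_eq_zero_iff two_ne_zero |>.1 h0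
  · exact pow_eq_zero_iff two_ne_zero |>.1 h1

lemma contDiff_normSq2 : ContDiff ℝ ∞ normSq2 := by
  unfold normSq2
  fun_prop

@[fun_prop] lemma measurable_normSq2 : Measurable normSq2 := contDiff_normSq2.continuous.measurable

lemma lintegral_Ioi_comp_sq (G : ℝ → ℝ≥0∞) :
    ∫⁻ q in Set.Ioi 0, G q = ∫⁻ r in Set.Ioi (0 : ℝ), ENNReal.ofReal (2 * r) * G (r ^ 2) := by
  have himage : (fun r : ℝ => r ^ 2) '' Set.Ioi 0 = Set.Ioi 0 := by
    ext q
    refine ⟨?_, fun hq => ⟨√q, Real.sqrt_pos.2 hq, Real.sq_sqrt (le_of_lt hq)⟩⟩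
    rintro ⟨r, hr, rfl⟩
    exact pow_pos (Set.mem_Ioi.1 hr) 2
  have hderiv (r : ℝ) (_ : r ∈ Set.Ioi 0) :
      HasDerivWithinAt (fun r : ℝ => r ^ 2) (2 * r) (Set.Ioi 0) r := by
    simpa using (hasDerivAt_pow 2 r).hasDerivWithinAt
  have hinj : Set.InjOn (fun r : ℝ => r ^ 2) (Set.Ioi 0) := fun r hr r' hr' h =>
    (pow_left_inj₀ (le_of_lt hr) (le_of_lt hr') two_ne_zero).1 h
  rw [← himage, lintegral_image_eq_lintegral_abs_deriv_mul measurableSet_Ioi hderiv hinj, himage]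
  refine setLIntegral_congr_fun measurableSet_Ioi fun r hr => ?_
  rw [abs_of_pos (mul_pos two_pos hr)]

lemma lintegral_comp_normSq2 {G : ℝ → ℝ≥0∞} (hG : Measurable G) :
    ∫⁻ v, G (normSq2 v) = ENNReal.ofReal Real.pi * ∫⁻ q in Set.Ioi 0, G q := by
  have hcircle (r θ : ℝ) :
      (polarCoord.symm (r, θ)).1 ^ 2 + (polarCoord.symm (r, θ)).2 ^ 2 = r ^ 2 := by
    simp only [polarCoord_symm_apply]
    linear_combination r ^ 2 * Real.sin_sq_add_cos_sq θ
  have hangle (r : ℝ) : ∫⁻ _θ in Set.Ioo (-Real.pi) Real.pi, ENNReal.ofReal r * G (r ^ 2) =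
      ENNReal.ofReal Real.pi * (ENNReal.ofReal (2 * r) * G (r ^ 2)) := by
    rw [setLIntegral_const, Real.volume_Ioo, ENNReal.ofReal_mul zero_le_two, sub_neg_eq_add,
      ← two_mul, ENNReal.ofReal_mul zero_le_two]
    ring
  calc ∫⁻ v, G (normSq2 v) = ∫⁻ z : ℝ × ℝ, G (z.1 ^ 2 + z.2 ^ 2) :=
        (volume_preserving_finTwoArrow ℝ).lintegral_comp
          (f := fun z => G (z.1 ^ 2 + z.2 ^ 2)) (by fun_prop)
    _ = ∫⁻ p in polarCoord.target, ENNReal.ofReal p.1 * G (p.1 ^ 2) := by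
        rw [← lintegral_comp_polarCoord_symm]
        simp only [hcircle, smul_eq_mul]
    _ = ∫⁻ r in Set.Ioi (0 : ℝ), ∫⁻ _θ in Set.Ioo (-Real.pi) Real.pi,
          ENNReal.ofReal r * G (r ^ 2) := by
        rw [polarCoord_target, Measure.volume_eq_prod, ← Measure.prod_restrict,
          lintegral_prod _ (by fun_prop)]
    _ = ENNReal.ofReal Real.pi * ∫⁻ q in Set.Ioi 0, G q := by
        simp only [hangle]
        rw [lintegral_Ioi_comp_sq G, lintegral_const_mul _ (by fun_prop)]

lemma lintegral_Ioc_rpow {s R : ℝ} (hs : -1 < s) (hR : 0 ≤ R) :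
    ∫⁻ q in Set.Ioc 0 R, ENNReal.ofReal (q ^ s) = ENNReal.ofReal (R ^ (s + 1) / (s + 1)) := by
  have hint : IntegrableOn (fun q : ℝ => q ^ s) (Set.Ioc 0 R) :=
    (intervalIntegrable_iff_integrableOn_Ioc_of_le hR).1
      (intervalIntegral.intervalIntegrable_rpow' hs)
  rw [← ofReal_integral_eq_lintegral_ofReal hint, ← intervalIntegral.integral_of_le hR,
    integral_rpow (Or.inl hs), Real.zero_rpow (by linarith), sub_zero]
  filter_upwards [ae_restrict_mem measurableSet_Ioc] with q hq
  exact Real.rpow_nonneg hq.1.le s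

lemma lintegral_normSq2_rpow {s R : ℝ} (hs : -1 < s) (hR : 0 ≤ R) :
    ∫⁻ v in {v | normSq2 v ≤ R}, ENNReal.ofReal (normSq2 v ^ s) =
      ENNReal.ofReal (Real.pi * (R ^ (s + 1) / (s + 1))) := by
  have hrpow : Measurable fun q : ℝ => ENNReal.ofReal (q ^ s) := by fun_prop
  rw [← lintegral_indicator (measurableSet_le measurable_normSq2 measurable_const),
    ENNReal.ofReal_mul Real.pi_nonneg, ← lintegral_Ioc_rpow hs hR, ← Set.Ioi_inter_Iic,
    Set.inter_comm, ← Measure.restrict_restrict measurableSet_Iic,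
    ← lintegral_indicator measurableSet_Iic,
    ← lintegral_comp_normSq2 (hrpow.indicator measurableSet_Iic)]
  rfl

/-- The uniform probability measure on the unit square. -/
def squareMeasure : Measure (Fin 2 → ℝ) := volume.restrict (Set.Icc 0 1)

instance : IsProbabilityMeasure squareMeasure where
  measure_univ := by simp [squareMeasure, Real.volume_Icc_pi]

lemma restrict_unitSquareConfigs (N : ℕ) :
    volume.restrict (unitSquareConfigs N) = Measure.pi fun _ => squareMeasure := by
  have hpi : unitSquareConfigs N = Set.univ.pi fun _ => Set.Icc 0 1 := by
    ext x
    simp only [unitSquareConfigs, Set.mem_ofPred_eq, Set.mem_pi, Set.mem_univ, true_imp_iff,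
      Set.mem_Icc, Pi.le_def, ← forall_and]
    rfl
  rw [hpi, volume_pi, Measure.restrict_pi_pi]
  rfl

lemma normSq2_sub_le_two {a b : Fin 2 → ℝ} (ha : a ∈ Set.Icc 0 1) (hb : b ∈ Set.Icc 0 1) :
    normSq2 (a - b) ≤ 2 := by
  have hcoord (p : Fin 2) : (a p - b p) ^ 2 ≤ 1 := by
    rw [sq_le_one_iff_abs_le_one, abs_le]
    have := ha.1 p; have := ha.2 p; have := hb.1 p; have := hb.2 p
    simp only [Pi.zero_apply, Pi.one_apply] at *
    constructor <;> linarith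
  calc normSq2 (a - b) = (a 0 - b 0) ^ 2 + (a 1 - b 1) ^ 2 := rfl
    _ ≤ 2 := by linarith [hcoord 0, hcoord 1]

lemma lintegral_squareMeasure_sub_left_le (K : (Fin 2 → ℝ) → ℝ≥0∞) (a : Fin 2 → ℝ) :
    ∫⁻ b, K (a - b) ∂squareMeasure ≤ ∫⁻ v, K v :=
  (lintegral_mono' Measure.restrict_le_self le_rfl).trans_eq (lintegral_sub_left_eq_self K a)

lemma lintegral_squareMeasure_sub_left_le_disc {a : Fin 2 → ℝ} (ha : a ∈ Set.Icc 0 1)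
    (K : (Fin 2 → ℝ) → ℝ≥0∞) :
    ∫⁻ b, K (a - b) ∂squareMeasure ≤ ∫⁻ v in {v | normSq2 v ≤ 2}, K v := by
  have hdisc : MeasurableSet {v | normSq2 v ≤ 2} :=
    measurableSet_le measurable_normSq2 measurable_const
  calc ∫⁻ b, K (a - b) ∂squareMeasure
      ≤ ∫⁻ b, {v | normSq2 v ≤ 2}.indicator K (a - b) ∂squareMeasure := by
        refine lintegral_mono_ae ?_
        filter_upwards [ae_restrict_mem measurableSet_Icc] with b hb
        exact (Set.indicator_of_mem (s := {v | normSq2 v ≤ 2}) (normSq2_sub_le_two ha hb) K).ge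
    _ ≤ ∫⁻ v, {v | normSq2 v ≤ 2}.indicator K v := lintegral_squareMeasure_sub_left_le _ a
    _ = ∫⁻ v in {v | normSq2 v ≤ 2}, K v := lintegral_indicator hdisc K

/- Split at distance `1/2`: the disc contributes `π`, outside it the integrand is at most `2`. -/
lemma lintegral_inv_dist_le (a : Fin 2 → ℝ) :
    ∫⁻ b, ENNReal.ofReal (normSq2 (a - b) ^ (-1 / 2 : ℝ)) ∂squareMeasure ≤
      ENNReal.ofReal (Real.pi + 2) := by
  set K : (Fin 2 → ℝ) → ℝ≥0∞ := fun v => ENNReal.ofReal (normSq2 v ^ (-1 / 2 : ℝ))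
  have hdisc : MeasurableSet {v | normSq2 v ≤ 1 / 4} :=
    measurableSet_le measurable_normSq2 measurable_const
  have hquarter : (1 / 4 : ℝ) ^ (1 / 2 : ℝ) = 1 / 2 := by
    rw [← Real.sqrt_eq_rpow, Real.sqrt_eq_iff_mul_self_eq_of_pos] <;> norm_num
  have hsplit (v : Fin 2 → ℝ) :
      K v ≤ {v | normSq2 v ≤ 1 / 4}.indicator K v + ENNReal.ofReal 2 := by
    by_cases hv : v ∈ {v | normSq2 v ≤ 1 / 4}
    · rw [Set.indicator_of_mem hv]
      exact le_self_add
    · refine le_add_left (ENNReal.ofReal_le_ofReal ?_)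
      calc normSq2 v ^ (-1 / 2 : ℝ) ≤ (1 / 4) ^ (-1 / 2 : ℝ) :=
            Real.rpow_le_rpow_of_nonpos (by norm_num) (not_le.1 hv).le (by norm_num)
        _ = 2 := by rw [neg_div, Real.rpow_neg (by norm_num), hquarter]; norm_num
  have hnear : ∫⁻ v in {v | normSq2 v ≤ 1 / 4}, K v = ENNReal.ofReal Real.pi := by
    rw [lintegral_normSq2_rpow (by norm_num) (by norm_num)]
    norm_num [hquarter]
  calc ∫⁻ b, K (a - b) ∂squareMeasure
      ≤ ∫⁻ b, ({v | normSq2 v ≤ 1 / 4}.indicator K (a - b) + ENNReal.ofReal 2) ∂squareMeasure :=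
        lintegral_mono fun b => hsplit (a - b)
    _ = ∫⁻ b, {v | normSq2 v ≤ 1 / 4}.indicator K (a - b) ∂squareMeasure + ENNReal.ofReal 2 := by
        rw [lintegral_add_right _ measurable_const, lintegral_const, measure_univ, mul_one]
    _ ≤ ENNReal.ofReal Real.pi + ENNReal.ofReal 2 := by
        gcongr
        refine (lintegral_squareMeasure_sub_left_le _ a).trans_eq ?_
        rw [lintegral_indicator hdisc, hnear]
    _ = _ := (ENNReal.ofReal_add Real.pi_nonneg zero_le_two).symm

end PlanarIntegrals

section PairProfile

variable {α β q : ℝ}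

lemma one_sub_rpow_le {x : ℝ} (hx : 0 < x) (hβ : 0 ≤ β) :
    1 - x ^ β ≤ 2 * β / Real.exp 1 * x ^ (-1 / 2 : ℝ) := by
  set y : ℝ := x ^ (-1 / 2 : ℝ)
  have hy : 0 < y := Real.rpow_pos_of_pos hx _
  have hlogy : Real.log y = -1 / 2 * Real.log x := Real.log_rpow hx _
  have hlog : Real.log y ≤ y / Real.exp 1 := by
    have := Real.log_le_sub_one_of_pos (div_pos hy (Real.exp_pos 1))
    rwa [Real.log_div hy.ne' (Real.exp_pos 1).ne', Real.log_exp, sub_le_sub_iff_right] at this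
  calc 1 - x ^ β ≤ -(Real.log x * β) := by
        rw [Real.rpow_def_of_pos hx]
        linarith [Real.add_one_le_exp (Real.log x * β)]
    _ = 2 * β * Real.log y := by rw [hlogy]; ring
    _ ≤ 2 * β * (y / Real.exp 1) := by gcongr
    _ = 2 * β / Real.exp 1 * y := by ring

/-- The two-body factor of the trial state as a function of the squared distance `q` of the two
particles: `(q / 2) ^ (β / 2)`, smoothly cut off near `q = 0` and above the value `1`, which
`(q / 2) ^ (β / 2)` does not exceed on the unit square. -/
def pairProfile (β q : ℝ) : ℝ := softClamp (β / 5) ((q / 2) ^ (β / 2))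

/-- The derivative of `pairProfile β`. -/
def pairProfileDeriv (β q : ℝ) : ℝ :=
  softClampDeriv (β / 5) ((q / 2) ^ (β / 2)) * (β / 2 * ((q / 2) ^ (β / 2) / q))

lemma pairProfile_eventually_eq_zero (hβ : 0 < β) : ∀ᶠ q in nhds 0, pairProfile β q = 0 := by
  have hcont : ContinuousAt (fun q : ℝ => (q / 2) ^ (β / 2)) 0 :=
    (continuousAt_id.div_const 2).rpow_const (Or.inr (by positivity))
  have hsmall : (0 / 2 : ℝ) ^ (β / 2) < β / 5 := by
    rw [zero_div, Real.zero_rpow (by positivity)]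
    positivity
  filter_upwards [hcont.eventually_lt continuousAt_const hsmall] with q hq
  exact softClamp_of_le (by positivity) hq.le

lemma hasDerivAt_pairProfile (hβ : 0 < β) (q : ℝ) :
    HasDerivAt (pairProfile β) (pairProfileDeriv β q) q := by
  rcases eq_or_ne q 0 with rfl | hq
  · have hzero : pairProfileDeriv β 0 = 0 := by simp [pairProfileDeriv]
    rw [hzero]
    exact (hasDerivAt_const 0 0).congr_of_eventuallyEq (pairProfile_eventually_eq_zero hβ)
  · have hpow : HasDerivAt (fun q : ℝ => (q / 2) ^ (β / 2))
        (β / 2 * ((q / 2) ^ (β / 2) / q)) q := by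
      have hq2 : q / 2 ≠ 0 := by simpa using hq
      refine ((Real.hasDerivAt_rpow_const (Or.inl hq2)).comp q
        ((hasDerivAt_id q).div_const 2)).congr_deriv ?_
      rw [Real.rpow_sub_one hq2]
      field_simp
    exact (hasDerivAt_softClamp (β / 5) _).comp q hpow

lemma contDiff_pairProfile (hβ : 0 < β) : ContDiff ℝ ∞ (pairProfile β) := by
  rw [contDiff_iff_contDiffAt]
  intro q
  rcases eq_or_ne q 0 with rfl | hq
  · exact contDiffAt_const.congr_of_eventuallyEq (pairProfile_eventually_eq_zero hβ)
  · exact (contDiff_softClamp _).contDiffAt.comp q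
      ((contDiffAt_id.div_const 2).rpow_const_of_ne (by simpa using hq))

lemma pairProfile_mem_Icc (hβ : 0 ≤ β) (q : ℝ) : pairProfile β q ∈ Set.Icc 0 1 :=
  ⟨softClamp_nonneg (by positivity) _, softClamp_le_one (by positivity) _⟩

lemma half_rpow_sq (hq : 0 ≤ q) (β : ℝ) : ((q / 2) ^ (β / 2)) ^ 2 = (q / 2) ^ β := by
  rw [← Real.rpow_mul_natCast (by positivity)]
  congr 1
  push_cast
  ring

lemma pairProfile_sq_le (hβ : 0 ≤ β) (hq : 0 ≤ q) : pairProfile β q ^ 2 ≤ (q / 2) ^ β := by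
  rw [← half_rpow_sq hq]
  exact pow_le_pow_left₀ (pairProfile_mem_Icc hβ q).1
    (softClamp_le_self (by positivity) (by positivity)) 2

lemma pairProfileDeriv_sq_le (hq : 0 ≤ q) (β : ℝ) :
    pairProfileDeriv β q ^ 2 ≤ β ^ 2 / 4 * (q / 2) ^ β / q ^ 2 := by
  rw [← half_rpow_sq hq, pairProfileDeriv, mul_pow]
  refine (mul_le_of_le_one_left (sq_nonneg _) (pow_le_one₀ (softClampDeriv_nonneg _ _)
    (softClampDeriv_le_one _ _))).trans_eq ?_
  ring

lemma one_sub_pairProfile_sq_le (hβ : 0 < β) (hq : 0 < q) :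
    1 - pairProfile β q ^ 2 ≤ 2 * β / Real.exp 1 * (q / 2) ^ (-1 / 2 : ℝ) + 4 / 5 * β := by
  set φ := pairProfile β q
  set s : ℝ := (q / 2) ^ (β / 2)
  have hs : 0 ≤ s := by positivity
  obtain ⟨hφ0, hφ1⟩ : φ ∈ Set.Icc 0 1 := pairProfile_mem_Icc hβ.le q
  have hφs : φ ≤ min s 1 := le_min (softClamp_le_self (by positivity) hs) hφ1
  have hclamp : min s 1 - 2 * (β / 5) ≤ φ := min_one_sub_le_softClamp (by positivity) s
  have hmin : 1 - min s 1 ^ 2 ≤ 2 * β / Real.exp 1 * (q / 2) ^ (-1 / 2 : ℝ) := by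
    rcases le_total s 1 with h | h
    · rw [min_eq_left h, half_rpow_sq hq.le]
      exact one_sub_rpow_le (by positivity) hβ.le
    · rw [min_eq_right h, one_pow, sub_self]
      positivity
  have hdiff : min s 1 ^ 2 - φ ^ 2 ≤ 4 / 5 * β := by
    have hsum : min s 1 + φ ≤ 2 := by linarith [min_le_right s 1]
    calc min s 1 ^ 2 - φ ^ 2 = (min s 1 - φ) * (min s 1 + φ) := by ring
      _ ≤ 2 * (β / 5) * 2 := mul_le_mul (by linarith) hsum (by linarith) (by positivity)
      _ = 4 / 5 * β := by ring
  linarith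

lemma sqrt_two_div_exp_mul_pi_add_two_le :
    √2 / Real.exp 1 * (Real.pi + 2) ≤ Real.pi - 2 / 5 := by
  have hsqrt : √2 ≤ 1.415 := by
    rw [Real.sqrt_le_left (by norm_num)]
    norm_num
  have hpi := Real.pi_gt_d2
  rw [div_mul_eq_mul_div, div_le_iff₀ (Real.exp_pos 1)]
  calc √2 * (Real.pi + 2) ≤ 1.415 * (Real.pi + 2) := by gcongr
    _ ≤ (Real.pi - 2 / 5) * 2.7182818283 := by linarith
    _ ≤ (Real.pi - 2 / 5) * Real.exp 1 := by
        gcongr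
        · linarith
        · exact Real.exp_one_gt_d9.le

end PairProfile

section PairWeight

variable {α β : ℝ}

/-- `pairProfile β` of the squared distance, as a function of an unordered pair of points. -/
def pairWeight (β : ℝ) : Sym2 (Fin 2 → ℝ) → ℝ :=
  Sym2.lift ⟨fun a b => pairProfile β (normSq2 (a - b)), fun a b =>
    congrArg _ (by rw [← normSq2_neg, neg_sub])⟩

lemma pairWeight_mem_Icc (hβ : 0 ≤ β) (e : Sym2 (Fin 2 → ℝ)) : pairWeight β e ∈ Set.Icc 0 1 := by
  induction e with | _ a b
  exact pairProfile_mem_Icc hβ _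

lemma measurable_pairWeight (hβ : 0 < β) :
    Measurable fun p : (Fin 2 → ℝ) × (Fin 2 → ℝ) => pairWeight β s(p.1, p.2) :=
  (contDiff_pairProfile hβ).continuous.measurable.comp
    (measurable_normSq2.comp (measurable_fst.sub measurable_snd))

lemma lintegral_one_sub_pairWeight_sq_le (hβ : 0 < β) (a : Fin 2 → ℝ) :
    ∫⁻ b, ENNReal.ofReal (1 - pairWeight β s(a, b) ^ 2) ∂squareMeasure ≤
      ENNReal.ofReal (2 * Real.pi * β) := by
  set c : ℝ := 2 * β / Real.exp 1 * √2
  have hc : 0 ≤ c := by positivity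
  have hpoint : ∀ᵐ b ∂squareMeasure, 1 - pairWeight β s(a, b) ^ 2 ≤
      c * normSq2 (a - b) ^ (-1 / 2 : ℝ) + 4 / 5 * β := by
    filter_upwards [ae_restrict_of_ae (Measure.ae_ne volume a)] with b hb
    have hq : 0 < normSq2 (a - b) := normSq2_pos (sub_ne_zero.2 hb.symm)
    refine (one_sub_pairProfile_sq_le hβ hq).trans_eq ?_
    rw [Real.div_rpow hq.le zero_le_two, neg_div, Real.rpow_neg zero_le_two (1 / 2),
      ← Real.sqrt_eq_rpow, div_inv_eq_mul, mul_comm (_ ^ _), mul_assoc]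
  calc _ ≤ ∫⁻ b, (ENNReal.ofReal c * ENNReal.ofReal (normSq2 (a - b) ^ (-1 / 2 : ℝ)) +
          ENNReal.ofReal (4 / 5 * β)) ∂squareMeasure := by
        refine lintegral_mono_ae (hpoint.mono fun b hb => ?_)
        rw [← ENNReal.ofReal_mul hc]
        exact (ENNReal.ofReal_le_ofReal hb).trans ENNReal.ofReal_add_le
    _ ≤ ENNReal.ofReal c * ENNReal.ofReal (Real.pi + 2) + ENNReal.ofReal (4 / 5 * β) := by
        rw [lintegral_add_right _ measurable_const, lintegral_const, measure_univ, mul_one,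
          lintegral_const_mul' _ _ ENNReal.ofReal_ne_top]
        gcongr
        exact lintegral_inv_dist_le a
    _ ≤ ENNReal.ofReal (2 * Real.pi * β) := by
        rw [← ENNReal.ofReal_mul hc, ← ENNReal.ofReal_add (by positivity) (by positivity)]
        refine ENNReal.ofReal_le_ofReal ?_
        calc c * (Real.pi + 2) + 4 / 5 * β
            = 2 * β * (√2 / Real.exp 1 * (Real.pi + 2)) + 4 / 5 * β := by ring
          _ ≤ 2 * β * (Real.pi - 2 / 5) + 4 / 5 * β := by
              gcongr
              exact sqrt_two_div_exp_mul_pi_add_two_le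
          _ = 2 * Real.pi * β := by ring

/-- The magnetic gradient `(-i∇ + α v^⊥/|v|²) f` of the two-body factor
`f v = pairProfile β (normSq2 v)` in the relative coordinate `v`. -/
def pairGradient (α β : ℝ) (v : Fin 2 → ℝ) : EuclideanSpace ℂ (Fin 2) :=
  WithLp.toLp 2 fun p => -Complex.I * (pairProfileDeriv β (normSq2 v) * (2 * v p) : ℝ) +
    (α * (perp2 v p / normSq2 v) * pairProfile β (normSq2 v) : ℝ)

lemma norm_neg_I_mul_add_sq (a b : ℝ) : ‖-Complex.I * (a : ℂ) + (b : ℂ)‖ ^ 2 = a ^ 2 + b ^ 2 := by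
  rw [Complex.sq_norm, Complex.normSq_apply]
  simp
  ring

lemma norm_pairGradient_sq (α β : ℝ) (v : Fin 2 → ℝ) :
    ‖pairGradient α β v‖ ^ 2 = 4 * pairProfileDeriv β (normSq2 v) ^ 2 * normSq2 v +
      α ^ 2 * pairProfile β (normSq2 v) ^ 2 / normSq2 v := by
  have hgrad (d : ℝ) : (d * (2 * v 0)) ^ 2 + (d * (2 * v 1)) ^ 2 = 4 * d ^ 2 * normSq2 v := by
    rw [normSq2]
    ring
  have hperp (f : ℝ) : (α * (perp2 v 0 / normSq2 v) * f) ^ 2 +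
      (α * (perp2 v 1 / normSq2 v) * f) ^ 2 = α ^ 2 * f ^ 2 / normSq2 v := by
    have hsum : perp2 v 0 ^ 2 + perp2 v 1 ^ 2 = normSq2 v := by simp [perp2, normSq2, add_comm]
    calc _ = α ^ 2 * f ^ 2 * ((perp2 v 0 ^ 2 + perp2 v 1 ^ 2) / normSq2 v / normSq2 v) := by ring
      _ = _ := by rw [hsum, div_div, div_self_mul_self', div_eq_mul_inv]
  rw [EuclideanSpace.norm_sq_eq, Fin.sum_univ_two]
  simp only [pairGradient, norm_neg_I_mul_add_sq]
  rw [← hgrad, ← hperp]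
  ring

lemma norm_pairGradient_sq_le (hα : 0 ≤ α) (hαβ : α ≤ β) (v : Fin 2 → ℝ) :
    ‖pairGradient α β v‖ ^ 2 ≤ 2 * β ^ 2 * ((normSq2 v / 2) ^ β / normSq2 v) := by
  have hβ : 0 ≤ β := hα.trans hαβ
  rw [norm_pairGradient_sq]
  rcases (normSq2_nonneg v).eq_or_lt with hq | hq
  · simp [← hq]
  · calc _ ≤ 4 * (β ^ 2 / 4 * (normSq2 v / 2) ^ β / normSq2 v ^ 2) * normSq2 v +
          β ^ 2 * (normSq2 v / 2) ^ β / normSq2 v := by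
          gcongr
          · exact pairProfileDeriv_sq_le hq.le β
          · exact pairProfile_sq_le hβ hq.le
      _ = 2 * β ^ 2 * ((normSq2 v / 2) ^ β / normSq2 v) := by
          field_simp
          ring

lemma norm_pairGradient_le (hα : 0 ≤ α) (hαβ : α ≤ β) {v : Fin 2 → ℝ} (hv : normSq2 v ≤ 2) :
    ‖pairGradient α β v‖ ≤ √2 * β * normSq2 v ^ (-1 / 2 : ℝ) := by
  have hβ : 0 ≤ β := hα.trans hαβ
  have hq := normSq2_nonneg v
  have hrpow : (normSq2 v / 2) ^ β ≤ 1 := Real.rpow_le_one (by positivity) (by linarith) hβ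
  refine abs_le_of_sq_le_sq' ?_ (by positivity) |>.2
  calc ‖pairGradient α β v‖ ^ 2 ≤ 2 * β ^ 2 * ((normSq2 v / 2) ^ β / normSq2 v) :=
        norm_pairGradient_sq_le hα hαβ v
    _ ≤ 2 * β ^ 2 * (1 / normSq2 v) := by gcongr
    _ = (√2 * β * normSq2 v ^ (-1 / 2 : ℝ)) ^ 2 := by
        rw [mul_pow, mul_pow, Real.sq_sqrt zero_le_two, ← Real.rpow_mul_natCast hq]
        norm_num [Real.rpow_neg_one]

@[fun_prop] lemma measurable_perp2 : Measurable perp2 :=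
  measurable_pi_lambda _ <| Fin.forall_fin_two.2
    ⟨(measurable_pi_apply 1).neg, measurable_pi_apply 0⟩

lemma measurable_pairProfileDeriv (β : ℝ) : Measurable (pairProfileDeriv β) := by
  have hclamp := (contDiff_softClampDeriv (β / 5)).continuous.measurable
  unfold pairProfileDeriv
  fun_prop

lemma measurable_pairGradient (α : ℝ) (hβ : 0 < β) : Measurable (pairGradient α β) := by
  have hprofile := (contDiff_pairProfile hβ).continuous.measurable
  have hderiv := measurable_pairProfileDeriv β
  refine (WithLp.measurable_toLp 2 _).comp (measurable_pi_lambda _ fun p => ?_)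
  fun_prop

lemma lintegral_enorm_pairGradient_sq_le (hα : 0 ≤ α) (hαβ : α ≤ β) (hβ : 0 < β) :
    ∀ᵐ a ∂squareMeasure, ∫⁻ b, ‖pairGradient α β (a - b)‖ₑ ^ 2 ∂squareMeasure ≤
      ENNReal.ofReal (2 * Real.pi * β) := by
  filter_upwards [ae_restrict_mem measurableSet_Icc] with a ha
  have hpoint (v : Fin 2 → ℝ) : ‖pairGradient α β v‖ₑ ^ 2 ≤
      ENNReal.ofReal (2 * β ^ 2 * (2 ^ β)⁻¹) * ENNReal.ofReal (normSq2 v ^ (β - 1)) := by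
    rw [← ofReal_norm, ← ENNReal.ofReal_pow (norm_nonneg _), ← ENNReal.ofReal_mul (by positivity)]
    refine ENNReal.ofReal_le_ofReal ((norm_pairGradient_sq_le hα hαβ v).trans ?_)
    have hq := normSq2_nonneg v
    rcases hq.eq_or_lt with hq0 | hq0
    · rw [← hq0, div_zero, mul_zero]
      positivity
    · rw [Real.rpow_sub_one hq0.ne', Real.div_rpow hq zero_le_two]
      exact le_of_eq (by ring)
  calc ∫⁻ b, ‖pairGradient α β (a - b)‖ₑ ^ 2 ∂squareMeasure
      ≤ ∫⁻ v in {v | normSq2 v ≤ 2}, ‖pairGradient α β v‖ₑ ^ 2 :=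
        lintegral_squareMeasure_sub_left_le_disc ha fun v => ‖pairGradient α β v‖ₑ ^ 2
    _ ≤ ENNReal.ofReal (2 * β ^ 2 * (2 ^ β)⁻¹) *
          ∫⁻ v in {v | normSq2 v ≤ 2}, ENNReal.ofReal (normSq2 v ^ (β - 1)) := by
        rw [← lintegral_const_mul' _ _ ENNReal.ofReal_ne_top]
        exact lintegral_mono hpoint
    _ = ENNReal.ofReal (2 * Real.pi * β) := by
        rw [lintegral_normSq2_rpow (by linarith) zero_le_two, ← ENNReal.ofReal_mul (by positivity),
          sub_add_cancel]
        congr 1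
        field_simp

lemma lintegral_enorm_pairGradient_le (hα : 0 ≤ α) (hαβ : α ≤ β) :
    ∀ᵐ a ∂squareMeasure, ∫⁻ b, ‖pairGradient α β (a - b)‖ₑ ∂squareMeasure ≤
      ENNReal.ofReal (√2 * β * (Real.pi + 2)) := by
  have hβ : 0 ≤ β := hα.trans hαβ
  filter_upwards [ae_restrict_mem measurableSet_Icc] with a ha
  calc ∫⁻ b, ‖pairGradient α β (a - b)‖ₑ ∂squareMeasure
      ≤ ∫⁻ b, ENNReal.ofReal (√2 * β) * ENNReal.ofReal (normSq2 (a - b) ^ (-1 / 2 : ℝ))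
          ∂squareMeasure := by
        refine lintegral_mono_ae ((ae_restrict_mem measurableSet_Icc).mono fun b hb => ?_)
        rw [← ofReal_norm, ← ENNReal.ofReal_mul (by positivity)]
        exact ENNReal.ofReal_le_ofReal
          (norm_pairGradient_le hα hαβ (normSq2_sub_le_two ha hb))
    _ ≤ ENNReal.ofReal (√2 * β) * ENNReal.ofReal (Real.pi + 2) := by
        rw [lintegral_const_mul' _ _ ENNReal.ofReal_ne_top]
        gcongr
        exact lintegral_inv_dist_le a
    _ = _ := (ENNReal.ofReal_mul (by positivity)).symm

end PairWeight

section PairWeightDerivative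

variable {ι : Type*} {β : ℝ}

lemma hasFDerivAt_normSq2 (v : Fin 2 → ℝ) :
    HasFDerivAt normSq2 (∑ p, (2 * v p) • (.proj p : (Fin 2 → ℝ) →L[ℝ] ℝ)) v := by
  have hcoord (p : Fin 2) : HasFDerivAt (fun v : Fin 2 → ℝ => v p ^ 2)
      ((2 * v p) • (.proj p : (Fin 2 → ℝ) →L[ℝ] ℝ)) v := by
    simpa using (hasFDerivAt_apply (𝕜 := ℝ) p v).pow 2
  rw [Fin.sum_univ_two]
  exact (hcoord 0).add (hcoord 1)

lemma fderiv_pairWeight_map_single [Finite ι] [DecidableEq ι] (hβ : 0 < β) (a b j : ι) (p : Fin 2)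
    (x : ι → Fin 2 → ℝ) :
    fderiv ℝ (fun y => pairWeight β (s(a, b).map y)) x (Pi.single j (Pi.single p 1)) =
      pairProfileDeriv β (normSq2 (x a - x b)) * (2 * (x a - x b) p) *
        ((if a = j then 1 else 0) - if b = j then 1 else 0) := by
  cases nonempty_fintype ι
  let D : (ι → Fin 2 → ℝ) →L[ℝ] Fin 2 → ℝ := .proj a - .proj b
  let G : (Fin 2 → ℝ) →L[ℝ] ℝ := ∑ q, (2 * (x a - x b) q) • .proj q
  have hnormSq : HasFDerivAt normSq2 G (D x) := hasFDerivAt_normSq2 _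
  have hderiv : HasFDerivAt (fun y => pairProfile β (normSq2 (D y)))
      (pairProfileDeriv β (normSq2 (x a - x b)) • G.comp D) x :=
    (hasDerivAt_pairProfile hβ _).comp_hasFDerivAt x (hnormSq.comp x D.hasFDerivAt)
  have hD : D (Pi.single j (Pi.single p 1)) =
      ((if a = j then 1 else 0) - if b = j then 1 else 0 : ℝ) • Pi.single p 1 := by
    simp [D, Pi.single_apply, sub_smul]
  have hG : G (Pi.single p 1) = 2 * (x a - x b) p := by
    rw [sum_apply, Finset.sum_eq_single p (by simp +contextual) (by simp)]
    simp
  rw [show fderiv ℝ (fun y => pairWeight β (s(a, b).map y)) x = _ from hderiv.fderiv,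
    smul_apply, ContinuousLinearMap.comp_apply, hD, map_smul, hG]
  simp only [smul_eq_mul]
  ring

variable [Fintype ι]

lemma contDiff_pairWeight_map (hβ : 0 < β) (e : Sym2 ι) :
    ContDiff ℝ ∞ fun x : ι → Fin 2 → ℝ => pairWeight β (e.map x) := by
  induction e with | _ a b
  exact (contDiff_pairProfile hβ).comp (contDiff_normSq2.comp (by fun_prop))

lemma contDiff_jastrow_pairWeight (hβ : 0 < β) (P : Finset (Sym2 ι)) :
    ContDiff ℝ ∞ (jastrow (pairWeight β) P) :=
  contDiff_prod fun e _ => contDiff_pairWeight_map hβ e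

lemma fderiv_jastrow_pairWeight_single [DecidableEq ι] (hβ : 0 < β) (j : ι) (p : Fin 2)
    (x : ι → Fin 2 → ℝ) :
    fderiv ℝ (jastrow (pairWeight β) (pairs Finset.univ)) x (Pi.single j (Pi.single p 1)) =
      ∑ k ∈ Finset.univ.erase j, jastrow (pairWeight β) ((pairs Finset.univ).erase s(j, k)) x *
        (pairProfileDeriv β (normSq2 (x j - x k)) * (2 * (x j - x k) p)) := by
  have hdiff (e : Sym2 ι) : DifferentiableAt ℝ (fun y => pairWeight β (e.map y)) x :=
    (contDiff_pairWeight_map hβ e).contDiffAt.differentiableAt (by simp)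
  have hprod := HasFDerivAt.finsetProd (u := pairs Finset.univ)
    fun e _ => (hdiff e).hasFDerivAt
  rw [show fderiv ℝ (jastrow (pairWeight β) (pairs Finset.univ)) x = _ from hprod.fderiv,
    sum_apply]
  have hsplit := sum_pairs_insert (Finset.notMem_erase j Finset.univ) fun e : Sym2 ι =>
    jastrow (pairWeight β) ((pairs Finset.univ).erase e) x *
      fderiv ℝ (fun y => pairWeight β (e.map y)) x (Pi.single j (Pi.single p 1))
  rw [Finset.insert_erase (Finset.mem_univ j)] at hsplit
  refine hsplit.trans ?_
  rw [Finset.sum_eq_zero, zero_add]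
  · refine Finset.sum_congr rfl fun k hk => ?_
    rw [fderiv_pairWeight_map_single hβ, if_pos rfl, if_neg (Finset.ne_of_mem_erase hk), sub_zero,
      mul_one]
  · intro e he
    induction e with | _ a b
    obtain ⟨⟨ha, hb⟩, -⟩ := mk_mem_pairs.1 he
    rw [fderiv_pairWeight_map_single hβ, if_neg (Finset.ne_of_mem_erase ha),
      if_neg (Finset.ne_of_mem_erase hb), sub_zero, mul_zero, mul_zero]

end PairWeightDerivative

section MagneticGradient

variable {N : ℕ} {α : ℝ} {Φ Ψ : (Fin N → Fin 2 → ℝ) → ℂ} {j : Fin N} {x : Fin N → Fin 2 → ℝ}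

/-- The magnetic gradient `(-i∇ⱼ + Aⱼ^α) Φ` at `x` with respect to the `j`-th particle. -/
def magneticGradient (α : ℝ) (Φ : (Fin N → Fin 2 → ℝ) → ℂ) (j : Fin N) (x : Fin N → Fin 2 → ℝ) :
    EuclideanSpace ℂ (Fin 2) :=
  WithLp.toLp 2 fun p => -Complex.I * fderiv ℝ Φ x (Pi.single j (Pi.single p 1)) +
    abPotential N α j p x * Φ x

lemma norm_magneticGradient_sq (α : ℝ) (Φ : (Fin N → Fin 2 → ℝ) → ℂ) (j : Fin N)
    (x : Fin N → Fin 2 → ℝ) :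
    ‖magneticGradient α Φ j x‖ ^ 2 = ∑ p, ‖-Complex.I * fderiv ℝ Φ x
      (Pi.single j (Pi.single p 1)) + (abPotential N α j p x : ℂ) * Φ x‖ ^ 2 :=
  EuclideanSpace.norm_sq_eq _

lemma measurable_magneticGradient (α : ℝ) (hΦ : ContDiff ℝ 1 Φ) (j : Fin N) :
    Measurable (magneticGradient α Φ j) := by
  have hderiv (p : Fin 2) := (hΦ.continuous_fderiv_apply one_ne_zero).comp
    (Continuous.prodMk_left (Pi.single j (Pi.single p 1)))
  have hΦm := hΦ.continuous.measurable
  have hpot (p : Fin 2) : Measurable (abPotential N α j p) := by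
    unfold abPotential
    fun_prop
  refine (WithLp.measurable_toLp 2 _).comp (measurable_pi_lambda _ fun p => ?_)
  exact ((hderiv p).measurable.const_mul _).add ((hpot p).complex_ofReal.mul hΦm)

lemma magneticGradient_congr (h : Φ =ᶠ[nhds x] Ψ) :
    magneticGradient α Φ j x = magneticGradient α Ψ j x := by
  simp only [magneticGradient, h.fderiv_eq, h.eq_of_nhds]

lemma magneticGradient_const_smul (c : ℝ) (α : ℝ) (Φ : (Fin N → Fin 2 → ℝ) → ℂ) (j : Fin N)
    (x : Fin N → Fin 2 → ℝ) :
    magneticGradient α (c • Φ) j x = c • magneticGradient α Φ j x := by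
  ext p
  simp only [magneticGradient, fderiv_const_smul_field, Pi.smul_apply, PiLp.smul_apply,
    smul_apply, Complex.real_smul]
  ring

/- The pair `{j, k}` contributes its factor to the product rule, and the term of the potential
coming from `k` acts on that same factor. -/
lemma magneticGradient_jastrow {β : ℝ} (hβ : 0 < β) (α : ℝ) (j : Fin N) (x : Fin N → Fin 2 → ℝ) :
    magneticGradient α (fun y => (jastrow (pairWeight β) (pairs Finset.univ) y : ℂ)) j x =
      ∑ k ∈ Finset.univ.erase j, jastrow (pairWeight β) ((pairs Finset.univ).erase s(j, k)) x •
        pairGradient α β (x j - x k) := by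
  have hderiv (v : Fin N → Fin 2 → ℝ) :
      fderiv ℝ (fun y => (jastrow (pairWeight β) (pairs Finset.univ) y : ℂ)) x v =
        (fderiv ℝ (jastrow (pairWeight β) (pairs Finset.univ)) x v : ℂ) := by
    have hdiff := (contDiff_jastrow_pairWeight hβ (pairs (Finset.univ : Finset (Fin N)))
      ).contDiffAt (x := x) |>.differentiableAt (by simp)
    exact DFunLike.congr_fun (Complex.ofRealCLM.hasFDerivAt.comp x hdiff.hasFDerivAt).fderiv v
  have hfactor (k : Fin N) (hk : k ∈ Finset.univ.erase j) :
      jastrow (pairWeight β) (pairs Finset.univ) x = pairProfile β (normSq2 (x j - x k)) *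
        jastrow (pairWeight β) ((pairs Finset.univ).erase s(j, k)) x :=
    (Finset.mul_prod_erase (pairs Finset.univ) (fun e => pairWeight β (e.map x))
      (mk_mem_pairs.2 ⟨by simp, (Finset.ne_of_mem_erase hk).symm⟩)).symm
  ext p
  simp only [magneticGradient, hderiv, fderiv_jastrow_pairWeight_single hβ, abPotential,
    ← Complex.ofReal_mul, Finset.mul_sum, Finset.sum_mul]
  rw [Complex.ofReal_sum, Complex.ofReal_sum, Finset.mul_sum, ← Finset.sum_add_distrib,
    WithLp.ofLp_sum, Finset.sum_apply]
  refine Finset.sum_congr rfl fun k hk => ?_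
  rw [hfactor k hk]
  simp only [pairGradient, PiLp.smul_apply, Complex.real_smul]
  push_cast
  ring

end MagneticGradient

lemma enorm_inv_sqrt_toReal_sq {D : ℝ≥0∞} (h0 : D ≠ 0) (htop : D ≠ ⊤) :
    ‖(√D.toReal)⁻¹‖ₑ ^ 2 = D⁻¹ := by
  rw [Real.enorm_of_nonneg (by positivity), ← ENNReal.ofReal_pow (by positivity), inv_pow,
    Real.sq_sqrt ENNReal.toReal_nonneg, ENNReal.ofReal_inv_of_pos (ENNReal.toReal_pos h0 htop),
    ENNReal.ofReal_toReal htop]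

lemma integral_sum_norm_sq_eq_toReal {X E κ : Type*} [MeasurableSpace X] [NormedAddCommGroup E]
    [MeasurableSpace E] [OpensMeasurableSpace E] {μ : Measure X} (s : Finset κ) {F : κ → X → E}
    (hF : ∀ i ∈ s, Measurable (F i)) :
    ∫ x, ∑ i ∈ s, ‖F i x‖ ^ 2 ∂μ = (∑ i ∈ s, ∫⁻ x, ‖F i x‖ₑ ^ 2 ∂μ).toReal := by
  have hmeas : Measurable fun x => ∑ i ∈ s, ‖F i x‖ ^ 2 :=
    Finset.measurable_fun_sum s fun i hi => (hF i hi).norm.pow_const 2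
  rw [integral_eq_lintegral_of_nonneg_ae (.of_forall fun x => by positivity)
    hmeas.aestronglyMeasurable, ← lintegral_finsetSum s fun i hi => (hF i hi).enorm.pow_const 2]
  congr with x
  rw [ENNReal.ofReal_sum_of_nonneg fun i _ => sq_nonneg _]
  simp only [ENNReal.ofReal_pow (norm_nonneg _), ofReal_norm]

section EnergyBound

variable {N : ℕ} {α β ε : ℝ}

/-- The upper bound `2πN(N−1)α (1 + (20/3)π(N−2)α) / (1 − 2παN)²` for the energy. -/
def energyBound (N : ℕ) (α : ℝ) : ℝ :=
  2 * Real.pi * N * (N - 1) * α * (1 + (20 / 3) * Real.pi * ((N : ℝ) - 2) * α) /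
    (1 - 2 * Real.pi * α * N) ^ 2

lemma exists_lt_energyBound_le (hN : 0 < N) (hα : α < (2 * Real.pi * N)⁻¹) (hε : 0 < ε) :
    ∃ β, α < β ∧ 2 * Real.pi * β * N < 1 ∧ energyBound N β ≤ energyBound N α + ε := by
  have hα1 : 2 * Real.pi * α * N < 1 := by
    rw [← one_div, lt_div_iff₀ (by positivity)] at hα
    linarith
  have hcont : ContinuousAt (energyBound N) α :=
    ContinuousAt.div (by fun_prop) (by fun_prop) (pow_ne_zero 2 (sub_ne_zero.2 hα1.ne'))
  have hbound : ∀ᶠ β in nhds α, energyBound N β < energyBound N α + ε :=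
    hcont.eventually_lt continuousAt_const (lt_add_of_pos_right _ hε)
  have hsmall : ∀ᶠ β in nhds α, 2 * Real.pi * β * N < 1 :=
    ContinuousAt.eventually_lt (by fun_prop) continuousAt_const hα1
  obtain ⟨β, ⟨hβ, hβN⟩, hαβ⟩ :=
    (((hbound.and hsmall).filter_mono nhdsWithin_le_nhds).and
      (self_mem_nhdsWithin (s := Set.Ioi α))).exists
  exact ⟨β, hαβ, hβN, hβ.le⟩

lemma energyBound_nonneg (hN : 2 ≤ N) (hα : 0 ≤ α) : 0 ≤ energyBound N α := by
  have h2 : (2 : ℝ) ≤ N := by exact_mod_cast hN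
  have hone : (0 : ℝ) ≤ N - 1 := by linarith
  have htwo : (0 : ℝ) ≤ N - 2 := by linarith
  unfold energyBound
  positivity

lemma natCast_mul_ofReal_lt_one (hβN : 2 * Real.pi * β * N < 1) :
    N * ENNReal.ofReal (2 * Real.pi * β) < 1 := by
  rw [← ENNReal.ofReal_natCast, ← ENNReal.ofReal_mul (Nat.cast_nonneg N), ENNReal.ofReal_lt_one]
  linarith

lemma le_ofReal_energyBound (hN : 2 ≤ N) (hβ : 0 ≤ β) (hβN : 2 * Real.pi * β * N < 1) :
    N * ((N - 1 : ℕ) * ((ENNReal.ofReal (2 * Real.pi * β) +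
      (N - 2 : ℕ) * ENNReal.ofReal (√2 * β * (Real.pi + 2)) ^ 2) /
        (1 - N * ENNReal.ofReal (2 * Real.pi * β)) ^ 2)) ≤ ENNReal.ofReal (energyBound N β) := by
  have hpi : (Real.pi + 2) ^ 2 ≤ 20 / 3 * Real.pi ^ 2 := by nlinarith [Real.pi_gt_three]
  have hsub (m : ℕ) (hm : m ≤ N) : ((N - m : ℕ) : ℝ≥0∞) = ENNReal.ofReal (N - m) := by
    rw [← ENNReal.ofReal_natCast, Nat.cast_sub hm]
  have hone : (0 : ℝ) ≤ N - (1 : ℕ) := sub_nonneg.2 (by exact_mod_cast one_le_two.trans hN)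
  have htwo : (0 : ℝ) ≤ N - (2 : ℕ) := sub_nonneg.2 (by exact_mod_cast hN)
  have hpos : 0 < 1 - N * (2 * Real.pi * β) := by linarith
  have hden : 1 - N * ENNReal.ofReal (2 * Real.pi * β) =
      ENNReal.ofReal (1 - N * (2 * Real.pi * β)) := by
    rw [ENNReal.ofReal_sub _ (by positivity), ENNReal.ofReal_mul N.cast_nonneg, ENNReal.ofReal_one,
      ENNReal.ofReal_natCast]
  rw [hden, hsub 1 (by omega), hsub 2 hN, ← ENNReal.ofReal_natCast N,
    ← ENNReal.ofReal_pow (by positivity), ← ENNReal.ofReal_pow hpos.le, ← ENNReal.ofReal_mul htwo,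
    ← ENNReal.ofReal_add (by positivity) (by positivity),
    ← ENNReal.ofReal_div_of_pos (by positivity), ← ENNReal.ofReal_mul hone,
    ← ENNReal.ofReal_mul N.cast_nonneg]
  push_cast at hone htwo ⊢
  refine ENNReal.ofReal_le_ofReal ?_
  calc _ = N * (N - 1) * (2 * Real.pi * β + (N - 2) * (2 * β ^ 2 * (Real.pi + 2) ^ 2)) /
        (1 - N * (2 * Real.pi * β)) ^ 2 := by
        rw [mul_pow, mul_pow, Real.sq_sqrt zero_le_two]
        ring
    _ ≤ N * (N - 1) * (2 * Real.pi * β + (N - 2) * (2 * β ^ 2 * (20 / 3 * Real.pi ^ 2))) /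
        (1 - N * (2 * Real.pi * β)) ^ 2 := by gcongr
    _ = energyBound N β := by
        rw [energyBound, mul_comm _ (N : ℝ)]
        ring

end EnergyBound

section TrialState

variable {N : ℕ} {α β : ℝ} {x : Fin N → Fin 2 → ℝ}

/-- A smooth cutoff of one-particle space which is `1` near the unit square. -/
def squareCutoff : ContDiffBump (0 : Fin 2 → ℝ) := ⟨2, 3, by norm_num, by norm_num⟩

lemma prod_squareCutoff_eventually_eq_one (hx : x ∈ unitSquareConfigs N) :
    ∀ᶠ y in nhds x, ∏ i, squareCutoff (y i) = 1 := by
  have hx2 : x ∈ Metric.ball 0 2 := by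
    simp only [mem_ball_zero_iff, pi_norm_lt_iff two_pos, Real.norm_eq_abs]
    intro i p
    rw [abs_of_nonneg (hx i p).1]
    exact (hx i p).2.trans_lt one_lt_two
  filter_upwards [Metric.isOpen_ball.mem_nhds hx2] with y hy
  refine Finset.prod_eq_one fun i _ => squareCutoff.one_of_mem_closedBall ?_
  exact mem_closedBall_zero_iff.2 ((norm_le_pi_norm y i).trans (mem_ball_zero_iff.1 hy).le)

lemma prod_squareCutoff_eq_zero (hx : x ∉ Metric.closedBall 0 3) :
    ∏ i, squareCutoff (x i) = 0 := by
  rw [mem_closedBall_zero_iff, pi_norm_le_iff_of_nonneg zero_le_three] at hx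
  push Not at hx
  obtain ⟨i, hi⟩ := hx
  exact Finset.prod_eq_zero (Finset.mem_univ i)
    (squareCutoff.zero_of_le_dist (by rw [dist_zero_right]; exact hi.le))

/-- The trial state: the product of `pairWeight β` over all pairs of particles, cut off outside the
unit square and normalized there. -/
def trialState (N : ℕ) (β : ℝ) (x : Fin N → Fin 2 → ℝ) : ℂ :=
  ((√(jastrowNormSq squareMeasure (pairWeight β) (Finset.univ : Finset (Fin N))).toReal)⁻¹ *
    (jastrow (pairWeight β) (pairs Finset.univ) x * ∏ i, squareCutoff (x i)) : ℝ)

lemma contDiff_trialState (hβ : 0 < β) : ContDiff ℝ ∞ (trialState N β) :=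
  Complex.ofRealCLM.contDiff.comp (contDiff_const.mul ((contDiff_jastrow_pairWeight hβ _).mul
    (contDiff_prod fun i _ => squareCutoff.contDiff.comp (contDiff_apply ℝ (Fin 2 → ℝ) i))))

lemma hasCompactSupport_trialState (N : ℕ) (β : ℝ) : HasCompactSupport (trialState N β) :=
  .intro (isCompact_closedBall 0 3) fun x hx => by
    simp [trialState, prod_squareCutoff_eq_zero hx]

lemma notMem_tsupport_trialState (hβ : 0 < β) (hx : x ∈ fatDiagonal N) :
    x ∉ tsupport (trialState N β) := by
  obtain ⟨j, k, hjk, hx⟩ := hx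
  have hcont : Continuous fun y : Fin N → Fin 2 → ℝ => normSq2 (y j - y k) :=
    contDiff_normSq2.continuous.comp (by fun_prop)
  have hlim : Filter.Tendsto (fun y : Fin N → Fin 2 → ℝ => normSq2 (y j - y k)) (nhds x) (nhds 0) :=
    hcont.tendsto' x 0 (by simp [hx, normSq2])
  rw [notMem_tsupport_iff_eventuallyEq]
  filter_upwards [hlim.eventually (pairProfile_eventually_eq_zero hβ)] with y hy
  have hzero : jastrow (pairWeight β) (pairs Finset.univ) y = 0 :=
    Finset.prod_eq_zero (mk_mem_pairs.2 ⟨by simp, hjk⟩) hy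
  simp [trialState, hzero]

lemma trialState_comp_perm (β : ℝ) (σ : Equiv.Perm (Fin N)) (x : Fin N → Fin 2 → ℝ) :
    trialState N β (x ∘ σ) = trialState N β x := by
  simp only [trialState, jastrow_pairs_univ_comp_perm, Function.comp_apply,
    Equiv.prod_comp σ fun i => squareCutoff (x i)]

lemma trialState_eventuallyEq (β : ℝ) (hx : x ∈ unitSquareConfigs N) :
    trialState N β =ᶠ[nhds x]
      (√(jastrowNormSq squareMeasure (pairWeight β) (Finset.univ : Finset (Fin N))).toReal)⁻¹ •
        fun y => (jastrow (pairWeight β) (pairs Finset.univ) y : ℂ) := by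
  filter_upwards [prod_squareCutoff_eventually_eq_one hx] with y hy
  simp [trialState, hy]

lemma ae_mem_unitSquareConfigs (N : ℕ) :
    ∀ᵐ x ∂Measure.pi fun _ : Fin N => squareMeasure, x ∈ unitSquareConfigs N := by
  rw [← restrict_unitSquareConfigs]
  refine ae_restrict_mem (IsClosed.measurableSet ?_)
  simp only [unitSquareConfigs, Set.ofPred_forall]
  exact isClosed_iInter fun j => isClosed_iInter fun p => isClosed_Icc.preimage (by fun_prop)

lemma jastrowNormSq_pairWeight_univ_ne_zero (hβ : 0 < β) (hβN : 2 * Real.pi * β * N < 1) :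
    jastrowNormSq squareMeasure (pairWeight β) (Finset.univ : Finset (Fin N)) ≠ 0 :=
  (jastrowNormSq_univ_pos (pairWeight_mem_Icc hβ.le) (measurable_pairWeight hβ)
    (.of_forall (lintegral_one_sub_pairWeight_sq_le hβ))
    (by simpa using natCast_mul_ofReal_lt_one hβN)).ne'

lemma integral_norm_trialState_sq (hβ : 0 < β) (hβN : 2 * Real.pi * β * N < 1) :
    ∫ x in unitSquareConfigs N, ‖trialState N β x‖ ^ 2 = 1 := by
  set Z := jastrowNormSq squareMeasure (pairWeight β) (Finset.univ : Finset (Fin N)) with hZ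
  have hZ0 : Z ≠ 0 := jastrowNormSq_pairWeight_univ_ne_zero hβ hβN
  have hZtop : Z ≠ ⊤ := jastrowNormSq_ne_top (pairWeight_mem_Icc hβ.le) _
  have hnorm : ∫⁻ x in unitSquareConfigs N, ‖trialState N β x‖ₑ ^ 2 = 1 := by
    calc _ = ∫⁻ x, Z⁻¹ * ‖jastrow (pairWeight β) (pairs Finset.univ) x‖ₑ ^ 2
            ∂Measure.pi fun _ : Fin N => squareMeasure := by
          rw [restrict_unitSquareConfigs]
          refine lintegral_congr_ae ?_
          filter_upwards [ae_mem_unitSquareConfigs N] with x hx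
          rw [(trialState_eventuallyEq β hx).eq_of_nhds, Pi.smul_apply, enorm_smul, mul_pow, ← hZ,
            enorm_inv_sqrt_toReal_sq hZ0 hZtop, ← ofReal_norm (Complex.ofReal _),
            Complex.norm_real, ofReal_norm]
      _ = Z⁻¹ * Z := lintegral_const_mul' _ _ (ENNReal.inv_ne_top.2 hZ0)
      _ = 1 := ENNReal.inv_mul_cancel hZ0 hZtop
  have hsum := integral_sum_norm_sq_eq_toReal (μ := volume.restrict (unitSquareConfigs N)) {()}
    fun _ _ => (contDiff_trialState (N := N) hβ).continuous.measurable
  simpa [hnorm] using hsum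

lemma lintegral_enorm_magneticGradient_trialState_sq_le (hα : 0 ≤ α) (hαβ : α ≤ β) (hβ : 0 < β)
    (hβN : 2 * Real.pi * β * N < 1) (j : Fin N) :
    ∫⁻ x in unitSquareConfigs N, ‖magneticGradient α (trialState N β) j x‖ₑ ^ 2 ≤
      (N - 1 : ℕ) * ((ENNReal.ofReal (2 * Real.pi * β) +
        (N - 2 : ℕ) * ENNReal.ofReal (√2 * β * (Real.pi + 2)) ^ 2) /
          (1 - N * ENNReal.ofReal (2 * Real.pi * β)) ^ 2) := by
  set Z := jastrowNormSq squareMeasure (pairWeight β) (Finset.univ : Finset (Fin N)) with hZ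
  have hZ0 : Z ≠ 0 := jastrowNormSq_pairWeight_univ_ne_zero hβ hβN
  have hw := pairWeight_mem_Icc hβ.le
  have hwm := measurable_pairWeight hβ
  have hZtop : Z ≠ ⊤ := jastrowNormSq_ne_top hw _
  have hpair (k l : Fin N) (hkl : k ≠ l) :=
    jastrowNormSq_compl_pair_le hw hwm (.of_forall (lintegral_one_sub_pairWeight_sq_le hβ))
      (by simpa using natCast_mul_ofReal_lt_one hβN) hkl
  have hsum := lintegral_enorm_sum_jastrow_erase_smul_sq_le
    (u := fun a b => pairGradient α β (a - b)) hw hwm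
    ((measurable_pairGradient α hβ).comp (measurable_fst.sub measurable_snd)).enorm
    (lintegral_enorm_pairGradient_sq_le hα hαβ hβ) (lintegral_enorm_pairGradient_le hα hαβ) hpair j
  rw [Fintype.card_fin, ← hZ] at hsum
  set C := ENNReal.ofReal (2 * Real.pi * β) +
    (N - 2 : ℕ) * ENNReal.ofReal (√2 * β * (Real.pi + 2)) ^ 2
  set q := (1 - N * ENNReal.ofReal (2 * Real.pi * β)) ^ 2
  calc _ = Z⁻¹ * ∫⁻ x, ‖∑ k ∈ Finset.univ.erase j, jastrow (pairWeight β)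
          ((pairs Finset.univ).erase s(j, k)) x • pairGradient α β (x j - x k)‖ₑ ^ 2
            ∂Measure.pi fun _ : Fin N => squareMeasure := by
        rw [restrict_unitSquareConfigs, ← lintegral_const_mul' _ _ (ENNReal.inv_ne_top.2 hZ0)]
        refine lintegral_congr_ae ((ae_mem_unitSquareConfigs N).mono fun x hx => ?_)
        simp only [magneticGradient_congr (trialState_eventuallyEq β hx), ← hZ,
          magneticGradient_const_smul, magneticGradient_jastrow hβ, enorm_smul, mul_pow,
          enorm_inv_sqrt_toReal_sq hZ0 hZtop]
    _ ≤ Z⁻¹ * ((N - 1 : ℕ) * (C * (Z / q))) := mul_le_mul_right hsum _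
    _ = Z⁻¹ * Z * ((N - 1 : ℕ) * (C / q)) := by
        simp only [div_eq_mul_inv]
        ring
    _ = (N - 1 : ℕ) * (C / q) := by rw [ENNReal.inv_mul_cancel hZ0 hZtop, one_mul]

lemma integral_sum_norm_magneticGradient_trialState_sq_le (hN : 2 ≤ N) (hα : 0 ≤ α) (hαβ : α ≤ β)
    (hβ : 0 < β) (hβN : 2 * Real.pi * β * N < 1) :
    ∫ x in unitSquareConfigs N, ∑ j, ‖magneticGradient α (trialState N β) j x‖ ^ 2 ≤
      energyBound N β := by
  rw [integral_sum_norm_sq_eq_toReal _ fun j _ => measurable_magneticGradient α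
    ((contDiff_trialState hβ).of_le (by simp)) j]
  refine ENNReal.toReal_le_of_le_ofReal (energyBound_nonneg hN hβ.le)
    (le_trans ?_ (le_ofReal_energyBound hN hβ.le hβN))
  have hsum := Finset.sum_le_card_nsmul Finset.univ _ _ fun j _ =>
    lintegral_enorm_magneticGradient_trialState_sq_le (N := N) hα hαβ hβ hβN j
  rwa [Finset.card_univ, Fintype.card_fin, nsmul_eq_mul] at hsum

end TrialState

/-- **Upper bound for the abelian anyon energy on the unit square.**
For `0 ≤ α < (2πN)⁻¹` and every `ε > 0` there is a smooth symmetric trial state, compactly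
supported away from the fat diagonal and `L²(Q₀^N)`-normalized, whose magnetic kinetic energy
on `Q₀^N` is at most `2πN(N−1)α (1 + (20/3)π(N−2)α)/(1 − 2παN)² + ε`. -/
theorem abelian_energy_upper_bound (N : ℕ) (hN : 2 ≤ N) (α : ℝ)
    (hα0 : 0 ≤ α) (hα1 : α < (2 * Real.pi * N)⁻¹) (ε : ℝ) (hε : 0 < ε) :
    ∃ Φ : (Fin N → Fin 2 → ℝ) → ℂ,
      ContDiff ℝ (⊤ : ℕ∞) Φ ∧ HasCompactSupport Φ ∧
      (∀ x ∈ fatDiagonal N, x ∉ tsupport Φ) ∧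
      (∀ (σ : Equiv.Perm (Fin N)) (x : Fin N → Fin 2 → ℝ), Φ (x ∘ σ) = Φ x) ∧
      (∫ x in unitSquareConfigs N, ‖Φ x‖ ^ 2) = 1 ∧
      (∫ x in unitSquareConfigs N, ∑ j : Fin N, ∑ p : Fin 2,
          ‖(-Complex.I) * fderiv ℝ Φ x (Pi.single j (Pi.single p 1)) +
            (abPotential N α j p x : ℂ) * Φ x‖ ^ 2) ≤
        2 * Real.pi * N * (N - 1) * α *
            (1 + (20 / 3) * Real.pi * ((N : ℝ) - 2) * α) / (1 - 2 * Real.pi * α * N) ^ 2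
          + ε := by
  obtain ⟨β, hαβ, hβN, hβε⟩ := exists_lt_energyBound_le (by omega) hα1 hε
  have hβ : 0 < β := hα0.trans_lt hαβ
  refine ⟨trialState N β, contDiff_trialState hβ, hasCompactSupport_trialState N β,
    fun x => notMem_tsupport_trialState hβ, trialState_comp_perm β,
    integral_norm_trialState_sq hβ hβN, le_trans ?_ hβε⟩
  simp only [← norm_magneticGradient_sq]
  exact integral_sum_norm_magneticGradient_trialState_sq_le hN hα0 hαβ.le hβ hβN
end
end
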